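/- arXiv:2507.14012 — 2 statements merged into one kernel-verified Lean document; each statement's English description precedes it below -/
import Mathlib

section
/- Let Δ ⊂ ℝ³ be a tetrahedron of unit volume. Then for every ℓ > 0 and every Borel set Ω ⊂ ℝ³ of finite measure and finite perimeter, Per(Ω) = ∫_G Per(Ω ∩ gℓΔ) dg/ℓ³ − Per(Δ) |Ω|/ℓ. -/
open MeasureTheory Metric Set Filter Bornology
open scoped Topology ENNReal NNReal Pointwise

noncomputable section

/-- Three-dimensional Euclidean space. -/
abbrev E3 : Type := EuclideanSpace ℝ (Fin 3)

/-- The divergence of a vector field on `E3`, defined as the trace of its derivative. -/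
def divg (φ : E3 → E3) (x : E3) : ℝ :=
  LinearMap.trace ℝ E3 (fderiv ℝ φ x : E3 →ₗ[ℝ] E3)

/-- The candidate values `∫_Ω div φ` over `C¹` compactly supported vector fields bounded by one. -/
def perCand (Ω : Set E3) : Set ℝ :=
  {a : ℝ | ∃ φ : E3 → E3, ContDiff ℝ 1 φ ∧ HasCompactSupport φ ∧
      (∀ x, ‖φ x‖ ≤ 1) ∧ a = ∫ x in Ω, divg φ x}

/-- The perimeter of a set, in the sense of geometric measure theory. -/
def per (Ω : Set E3) : ℝ := sSup (perCand Ω)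

/-- A set has finite perimeter if the family of integrals defining the perimeter is
bounded above. -/
def HasFinPer (Ω : Set E3) : Prop := BddAbove (perCand Ω)

/-- The Lebesgue volume of a set as a real number. -/
def vol (Ω : Set E3) : ℝ := (volume Ω).toReal

/-- The liquid drop energy `𝓔_Λ[ρ,Ω]`. -/
def ldEnergy (Λ : Set E3) (ρ : ℝ) (Ω : Set E3) : ℝ :=
  per Ω + (1/2) * ∫ x, ∫ y,
    (Set.indicator Ω (fun _ => (1:ℝ)) x - ρ * Set.indicator Λ (fun _ => (1:ℝ)) x) *
      (Set.indicator Ω (fun _ => (1:ℝ)) y - ρ * Set.indicator Λ (fun _ => (1:ℝ)) y) / ‖x - y‖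

/-- The neutral ground state energy `E_Λ(ρ)`. -/
def EE (Λ : Set E3) (ρ : ℝ) : ℝ :=
  sInf {t : ℝ | ∃ Ω : Set E3, MeasurableSet Ω ∧ Ω ⊆ Λ ∧ HasFinPer Ω ∧
    vol Ω = ρ * vol Λ ∧ t = ldEnergy Λ ρ Ω}

/-- The liquid drop energy `I[Ω]` of an isolated droplet (no background). -/
def II (Ω : Set E3) : ℝ :=
  per Ω + (1/2) * ∫ x in Ω, ∫ y in Ω, 1 / ‖x - y‖

/-- `μ* = inf I[Ω]/|Ω|`. -/
def muStar : ℝ :=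
  sInf {t : ℝ | ∃ Ω : Set E3, MeasurableSet Ω ∧ HasFinPer Ω ∧
    0 < volume Ω ∧ volume Ω < ⊤ ∧ t = II Ω / vol Ω}

/-- A minimizer for the isolated liquid drop problem. -/
def IsMinimizer (Ω : Set E3) : Prop :=
  MeasurableSet Ω ∧ HasFinPer Ω ∧ 0 < volume Ω ∧ volume Ω < ⊤ ∧ II Ω = muStar * vol Ω

/-- The set of masses of minimizers. -/
def minimizerMasses : Set ℝ := {m : ℝ | ∃ Ω : Set E3, IsMinimizer Ω ∧ m = vol Ω}

/-- The largest mass of a minimizer. -/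
def mStar : ℝ := sSup minimizerMasses

/-- The smallest mass of a minimizer. -/
def mStarStar : ℝ := sInf minimizerMasses

/-- `Λ` is an `(r,L)`-Lipschitz open set: near each boundary point it is, in a suitable
orthonormal coordinate system, the epigraph of an `L`-Lipschitz function. -/
def IsLipschitzDomain (r L : ℝ) (Λ : Set E3) : Prop :=
  ∀ x ∈ frontier Λ, ∃ (g : E3 ≃ᵢ E3) (f : ℝ × ℝ → ℝ),
    LipschitzWith L.toNNReal f ∧
    Λ ∩ ball x r = {y ∈ ball x r | f (g y 0, g y 1) < g y 2}

/-- Fisher regularity of the boundary. -/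
def FisherCond (C ℓ : ℝ) (Λ : Set E3) : Prop :=
  ∀ h : ℝ, 0 < h → h ≤ ℓ → (volume (frontier Λ + ball (0:E3) h)).toReal ≤ C * ℓ^2 * h

/-- An admissible sequence of domains for the thermodynamic limit. -/
def IsAdmissibleSeq (r L C : ℝ) (Λs : ℕ → Set E3) (ℓ : ℕ → ℝ) : Prop :=
  Tendsto ℓ atTop atTop ∧
  ∀ n : ℕ, IsOpen (Λs n) ∧ IsBounded (Λs n) ∧ IsLipschitzDomain r L (Λs n) ∧
    ball 0 (ℓ n / C) ⊆ Λs n ∧ Λs n ⊆ ball 0 (ℓ n) ∧ FisherCond C (ℓ n) (Λs n)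

/-- `e` is the thermodynamic limit function of the liquid drop model. -/
def IsThermoLimit (e : ℝ → ℝ) : Prop :=
  ∀ ρ : ℝ, 0 ≤ ρ → ρ ≤ 1 →
    ∀ (r L C : ℝ) (Λs : ℕ → Set E3) (ℓ : ℕ → ℝ), 0 < r → 0 < L → 0 < C →
      IsAdmissibleSeq r L C Λs ℓ →
      Tendsto (fun n => EE (Λs n) ρ / vol (Λs n)) atTop (𝓝 (e ρ))

/-- The domain for the `N`-particle Jellium problem: `N^{1/3} Λ₁` with `Λ₁` the ball of
unit volume centered at the origin. -/
def jelDomain (N : ℕ) : Set E3 :=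
  ball (0:E3) ((N : ℝ) ^ ((1:ℝ)/3) * (3 / (4 * Real.pi)) ^ ((1:ℝ)/3))

/-- The `N`-particle Jellium ground state energy. -/
def jelN (N : ℕ) : ℝ :=
  sInf {t : ℝ | ∃ x : Fin N → E3, (∀ j, x j ∈ jelDomain N) ∧
    t = (∑ j : Fin N, ∑ k : Fin N, if j < k then 1 / ‖x j - x k‖ else 0)
      - (∑ j : Fin N, ∫ y in jelDomain N, 1 / ‖x j - y‖)
      + (1/2) * ∫ x' in jelDomain N, ∫ y in jelDomain N, 1 / ‖x' - y‖}

/-- `eJ` is the Jellium energy per particle in the thermodynamic limit. -/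
def IsJelliumLimit (eJ : ℝ) : Prop :=
  Tendsto (fun N : ℕ => jelN N / (N : ℝ)) atTop (𝓝 eJ)

/-- The grand-canonical liquid drop energy `F_Λ(ρ)`. -/
def FF (Λ : Set E3) (ρ : ℝ) : ℝ :=
  sInf {t : ℝ | ∃ Ω : Set E3, MeasurableSet Ω ∧ Ω ⊆ Λ ∧ HasFinPer Ω ∧
    t = ldEnergy Λ ρ Ω - muStar * vol Ω}

/-- A tetrahedron: the interior of the convex hull of four affinely independent points. -/
def IsTetra (Δ : Set E3) : Prop :=
  ∃ v : Fin 4 → E3, AffineIndependent ℝ v ∧ Δ = interior (convexHull ℝ (Set.range v))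

/-- The open cube `(-L/2, L/2)³`. -/
def cubeL (Lside : ℝ) : Set E3 := {x : E3 | ∀ i, |x i| < Lside / 2}

/-- The grand-canonical Jellium energy of point particles of charge `m` in the domain `S`
with a uniform background of density one. -/
def pointJellium (m : ℝ) (S : Set E3) : ℝ :=
  sInf {t : ℝ | ∃ (n : ℕ) (x : Fin n → E3), (∀ j, x j ∈ S) ∧
    t = (∑ j : Fin n, ∑ k : Fin n, if j < k then m^2 / ‖x j - x k‖ else 0)
      - m * (∑ j : Fin n, ∫ y in S, 1 / ‖x j - y‖)
      + (1/2) * ∫ x' in S, ∫ y in S, 1 / ‖x' - y‖}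

/-- The conclusions of the decomposition theorem for minimizing sequences. -/
def IsDecomp (Ω : ℕ → Set E3) (m : ℝ) (K : ℕ) (Ωs : Fin K → Set E3)
    (a : ℕ → Fin K → E3) (R : ℝ) (φ : ℕ → ℕ) : Prop :=
  StrictMono φ ∧ 0 < R ∧
  (∀ j k : Fin K, j ≠ k → Tendsto (fun n => ‖a n j - a n k‖) atTop atTop) ∧
  (∀ j, IsMinimizer (Ωs j)) ∧
  (∀ j, mStarStar ≤ vol (Ωs j) ∧ vol (Ωs j) ≤ mStar) ∧
  (∀ j, Tendsto
    (fun n => volume (symmDiff ({x : E3 | x + a n j ∈ Ω (φ n)} ∩ ball (0:E3) R) (Ωs j)))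
    atTop (𝓝 0)) ∧
  Tendsto (fun n => volume (Ω (φ n) \ ⋃ j, ball (a n j) R)) atTop (𝓝 0) ∧
  Tendsto (fun n => per (Ω (φ n) \ ⋃ j, ball (a n j) R)) atTop (𝓝 0) ∧
  m = ∑ j, vol (Ωs j) ∧
  (2 ≤ K → ∃ ε : ℕ → ℝ, Tendsto ε atTop (𝓝 0) ∧ ∀ n : ℕ,
    muStar * vol (Ω (φ n)) +
      (∑ j : Fin K, ∑ k : Fin K,
        if j < k then (vol (Ωs j) * vol (Ωs k) + ε n) / ‖a n j - a n k‖ else 0)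
      ≤ II (Ω (φ n)))

instance : MeasurableSpace (Matrix (Fin 3) (Fin 3) ℝ) :=
  (inferInstance : MeasurableSpace (Fin 3 → Fin 3 → ℝ))

/-- The rotation group SO(3), as a set of matrices. -/
def SO3 : Set (Matrix (Fin 3) (Fin 3) ℝ) := {R | R * R.transpose = 1 ∧ R.det = 1}

/-- The action of a matrix on Euclidean space. -/
def rot (R : Matrix (Fin 3) (Fin 3) ℝ) (x : E3) : E3 :=
  (EuclideanSpace.equiv (Fin 3) ℝ).symm (R.mulVec (EuclideanSpace.equiv (Fin 3) ℝ x))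

/-- The image of a set under the rigid motion `x ↦ Rx + τ`. -/
def rigidImage (R : Matrix (Fin 3) (Fin 3) ℝ) (τ : E3) (S : Set E3) : Set E3 :=
  (fun x => rot R x + τ) '' S

/-- `μ` is the normalized Haar measure of SO(3): a probability measure concentrated on SO(3)
which is invariant under left multiplication by rotations. -/
def IsHaarSO3 (μ : Measure (Matrix (Fin 3) (Fin 3) ℝ)) : Prop :=
  IsProbabilityMeasure μ ∧ μ SO3ᶜ = 0 ∧ ∀ S ∈ SO3, Measure.map (fun R => S * R) μ = μ

/-- The cube of the tiling of side length `ε` indexed by `z ∈ ℤ³`. -/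
def cubeZ (ε : ℝ) (z : Fin 3 → ℤ) : Set E3 := {x : E3 | ∀ i, |x i - ε * (z i : ℝ)| < ε / 2}

/-- The distance between two sets. -/
def setDist (s t : Set E3) : ℝ := sInf {d : ℝ | ∃ p ∈ s, ∃ q ∈ t, d = dist p q}

/-- The outer cubic boundary layer of `Λ` at scale `ε`. -/
def outerLayer (Λ : Set E3) (ε : ℝ) : Set E3 :=
  ⋃ z ∈ {z : Fin 3 → ℤ | setDist (cubeZ ε z) (frontier Λ) ≤ ε}, closure (cubeZ ε z \ Λ)

/-- Admissible test fields. -/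
def Adm (φ : E3 → E3) : Prop :=
  ContDiff ℝ 1 φ ∧ HasCompactSupport φ ∧ ∀ x, ‖φ x‖ ≤ 1

/-- Extended perimeter. -/
def eper (Ω : Set E3) : ℝ≥0∞ :=
  ⨆ φ : {φ : E3 → E3 // Adm φ}, ENNReal.ofReal (∫ x in Ω, divg φ.1 x)

lemma adm_zero : Adm (0 : E3 → E3) :=
  ⟨contDiff_const, HasCompactSupport.zero, by simp⟩

lemma le_eper {φ : E3 → E3} (h : Adm φ) (Ω : Set E3) :
    ENNReal.ofReal (∫ x in Ω, divg φ x) ≤ eper Ω :=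
  le_iSup (fun φ : {φ : E3 → E3 // Adm φ} => ENNReal.ofReal (∫ x in Ω, divg φ.1 x)) ⟨φ, h⟩

lemma mem_perCand {Ω : Set E3} {a : ℝ} :
    a ∈ perCand Ω ↔ ∃ φ, Adm φ ∧ a = ∫ x in Ω, divg φ x := by
  constructor
  · rintro ⟨φ, h1, h2, h3, h4⟩; exact ⟨φ, ⟨h1, h2, h3⟩, h4⟩
  · rintro ⟨φ, ⟨h1, h2, h3⟩, h4⟩; exact ⟨φ, h1, h2, h3, h4⟩

lemma zero_mem_perCand (Ω : Set E3) : (0 : ℝ) ∈ perCand Ω := by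
  rw [mem_perCand]
  refine ⟨0, adm_zero, ?_⟩
  have : ∀ x, divg (0 : E3 → E3) x = 0 := by
    intro x; simp [divg, fderiv_zero]
  simp [this]

lemma eper_eq_ofReal {Ω : Set E3} (h : HasFinPer Ω) : eper Ω = ENNReal.ofReal (per Ω) := by
  apply le_antisymm
  · refine iSup_le fun φ => ENNReal.ofReal_le_ofReal ?_
    exact le_csSup h (mem_perCand.2 ⟨φ.1, φ.2, rfl⟩)
  · by_cases ht : eper Ω = ⊤
    · rw [ht]; exact le_top
    · rw [ENNReal.ofReal_le_iff_le_toReal ht]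
      refine csSup_le ⟨0, zero_mem_perCand Ω⟩ ?_
      intro a ha
      obtain ⟨φ, hφ, rfl⟩ := mem_perCand.1 ha
      exact (ENNReal.ofReal_le_iff_le_toReal ht).1 (le_eper hφ Ω)

lemma hasFinPer_of_ne_top {Ω : Set E3} (ht : eper Ω ≠ ⊤) : HasFinPer Ω := by
  refine ⟨(eper Ω).toReal, ?_⟩
  intro a ha
  obtain ⟨φ, hφ, rfl⟩ := mem_perCand.1 ha
  exact (ENNReal.ofReal_le_iff_le_toReal ht).1 (le_eper hφ Ω)

lemma per_nonneg (Ω : Set E3) : 0 ≤ per Ω := by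
  by_cases h : HasFinPer Ω
  · exact le_csSup h (zero_mem_perCand Ω)
  · unfold per; rw [Real.sSup_of_not_bddAbove h]

lemma per_eq_toReal (Ω : Set E3) : per Ω = (eper Ω).toReal := by
  by_cases h : HasFinPer Ω
  · rw [eper_eq_ofReal h, ENNReal.toReal_ofReal (per_nonneg Ω)]
  · have : eper Ω = ⊤ := by
      by_contra h'; exact h (hasFinPer_of_ne_top h')
    rw [this]; unfold per; rw [Real.sSup_of_not_bddAbove h]; simp

/-- basis vectors -/
abbrev bv (i : Fin 3) : E3 := EuclideanSpace.basisFun (Fin 3) ℝ i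

lemma divg_eq_sum (φ : E3 → E3) (x : E3) : divg φ x = ∑ i, fderiv ℝ φ x (bv i) i := by
  unfold divg
  rw [LinearMap.trace_eq_sum_inner _ (EuclideanSpace.basisFun (Fin 3) ℝ)]
  refine Finset.sum_congr rfl fun i _ => ?_
  simp [bv, EuclideanSpace.inner_single_left]

lemma divg_continuous {φ : E3 → E3} (h : ContDiff ℝ 1 φ) : Continuous (divg φ) := by
  have : divg φ = fun x => ∑ i, fderiv ℝ φ x (bv i) i := funext (divg_eq_sum φ)
  rw [this]
  have hc := h.continuous_fderiv one_ne_zero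
  fun_prop

lemma divg_hasCompactSupport {φ : E3 → E3} (h : HasCompactSupport φ) :
    HasCompactSupport (divg φ) := by
  have := h.fderiv (𝕜 := ℝ)
  refine this.comp_left (g := fun A : E3 →L[ℝ] E3 => LinearMap.trace ℝ E3 (A : E3 →ₗ[ℝ] E3)) ?_
  simp

lemma divg_integrable {φ : E3 → E3} (h : ContDiff ℝ 1 φ) (h' : HasCompactSupport φ) :
    Integrable (divg φ) :=
  (divg_continuous h).integrable_of_hasCompactSupport (divg_hasCompactSupport h')

lemma divg_smul {f : E3 → ℝ} {φ : E3 → E3} {x : E3} (hf : DifferentiableAt ℝ f x)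
    (hφ : DifferentiableAt ℝ φ x) :
    divg (fun y => f y • φ y) x = fderiv ℝ f x (φ x) + f x * divg φ x := by
  simp only [divg_eq_sum]
  rw [fderiv_fun_smul hf hφ]
  have h2 : fderiv ℝ f x (φ x) = ∑ i, fderiv ℝ f x (bv i) * φ x i := by
    conv_lhs => rw [← (EuclideanSpace.basisFun (Fin 3) ℝ).sum_repr (φ x)]
    rw [map_sum]
    refine Finset.sum_congr rfl fun i _ => ?_
    rw [map_smul]; simp [mul_comm]
  rw [h2, Finset.mul_sum, ← Finset.sum_add_distrib]
  refine Finset.sum_congr rfl fun i _ => ?_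
  simp [add_comm]

lemma divg_add {f g : E3 → E3} {x : E3} (hf : DifferentiableAt ℝ f x)
    (hg : DifferentiableAt ℝ g x) :
    divg (fun y => f y + g y) x = divg f x + divg g x := by
  simp only [divg_eq_sum]
  rw [fderiv_fun_add hf hg, ← Finset.sum_add_distrib]
  simp

lemma divg_comp_sub (φ : E3 → E3) (t x : E3) :
    divg (fun y => φ (y - t)) x = divg φ (x - t) := by
  unfold divg
  rw [fderiv_comp_sub]

lemma integral_fderiv_zero {f : E3 → ℝ} (h : ContDiff ℝ 1 f) (h' : HasCompactSupport f) (v : E3) :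
    ∫ x, fderiv ℝ f x v = 0 := by
  have hi : Integrable (fun x => fderiv ℝ f x v) :=
    ((h.continuous_fderiv one_ne_zero).clm_apply continuous_const).integrable_of_hasCompactSupport
      (h'.fderiv_apply (𝕜 := ℝ) v)
  have := integral_mul_fderiv_eq_neg_fderiv_mul_of_integrable (μ := (volume : Measure E3))
    (f := fun _ : E3 => (1 : ℝ)) (g := f) (v := v) (by simp) (by simpa using hi)
    (by simpa using h.continuous.integrable_of_hasCompactSupport h')
    (fun x _ => differentiableAt_const _)
    (fun x _ => h.differentiable one_ne_zero x)
  simpa using this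

lemma integral_divg_zero {φ : E3 → E3} (h : ContDiff ℝ 1 φ) (h' : HasCompactSupport φ) :
    ∫ x, divg φ x = 0 := by
  simp only [divg_eq_sum]
  have key : ∀ i, (fun x => fderiv ℝ φ x (bv i) i) = fun x => fderiv ℝ (fun y => φ y i) x (bv i) := by
    intro i
    funext x
    have := ((EuclideanSpace.proj i : E3 →L[ℝ] ℝ).hasFDerivAt.comp x
      (h.differentiable one_ne_zero x).hasFDerivAt).fderiv
    have h2 : (fun y => φ y i) = (EuclideanSpace.proj i : E3 →L[ℝ] ℝ) ∘ φ := rfl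
    rw [h2, this]; rfl
  have hC : ∀ i, ContDiff ℝ 1 (fun y => φ y i) := fun i =>
    (EuclideanSpace.proj i : E3 →L[ℝ] ℝ).contDiff.comp h
  have hS : ∀ i, HasCompactSupport (fun y => φ y i) := fun i =>
    h'.comp_left (g := fun y : E3 => y i) rfl
  rw [integral_finsetSum]
  · refine Finset.sum_eq_zero fun i _ => ?_
    rw [key i]; exact integral_fderiv_zero (hC i) (hS i) _
  · intro i _
    rw [key i]
    exact (((hC i).continuous_fderiv one_ne_zero).clm_apply
      continuous_const).integrable_of_hasCompactSupport ((hS i).fderiv_apply (𝕜 := ℝ) _)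

/-- integration by parts -/
lemma integral_mul_divg {w : E3 → ℝ} {φ : E3 → E3} (hw : ContDiff ℝ 1 w) (h : ContDiff ℝ 1 φ)
    (h' : HasCompactSupport φ) :
    ∫ x, w x * divg φ x = - ∫ x, fderiv ℝ w x (φ x) := by
  have h0 := integral_divg_zero (hw.smul h) (h'.smul_left (f := w))
  have e : ∀ x, divg (fun y => w y • φ y) x = fderiv ℝ w x (φ x) + w x * divg φ x := fun x =>
    divg_smul (hw.differentiable one_ne_zero x) (h.differentiable one_ne_zero x)
  have h0' : ∫ x, (fderiv ℝ w x (φ x) + w x * divg φ x) = 0 := by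
    rw [← h0]; exact integral_congr_ae (Eventually.of_forall fun x => (e x).symm)
  have i1 : Integrable fun x => fderiv ℝ w x (φ x) := by
    refine Continuous.integrable_of_hasCompactSupport
      ((hw.continuous_fderiv one_ne_zero).clm_apply h.continuous) ?_
    refine h'.mono ?_
    intro x hx hx'
    apply hx
    simp [hx']
  have i2 : Integrable fun x => w x * divg φ x :=
    (hw.continuous.mul (divg_continuous h)).integrable_of_hasCompactSupport
      (divg_hasCompactSupport h').mul_left
  rw [integral_add i1 i2] at h0'
  linarith

/-- a bump equal to one on a ball of radius `n + 1` -/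
def bigBump (n : ℕ) : ContDiffBump (0 : E3) := ⟨n + 1, n + 2, by positivity, by linarith⟩

lemma tv_le {w : E3 → ℝ} (hw : ContDiff ℝ 2 w) {P : ℝ≥0∞}
    (hP : ∀ φ, Adm φ → ENNReal.ofReal (∫ x, w x * divg φ x) ≤ P) :
    ∫⁻ x, ‖fderiv ℝ w x‖ₑ ≤ P := by
  set G : E3 → E3 := fun x => (InnerProductSpace.toDual ℝ E3).symm (fderiv ℝ w x) with hG
  have hfw : ContDiff ℝ 1 (fderiv ℝ w) := hw.fderiv_right (by norm_num)
  have hGC : ContDiff ℝ 1 G :=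
    (InnerProductSpace.toDual ℝ E3).symm.toContinuousLinearEquiv.contDiff.comp hfw
  have hGn : ∀ x, ‖G x‖ = ‖fderiv ℝ w x‖ := fun x => by simp [hG]
  have hGi : ∀ x v, fderiv ℝ w x v = inner ℝ (G x) v := fun x v => by
    simp [hG]
  let c : ℕ → ℝ := fun n => 1 / ((n : ℝ) + 1)
  have hc : ∀ n, 0 < c n := fun n => by positivity
  have hpos : ∀ n x, 0 < ‖G x‖ ^ 2 + c n := fun n x => by have := hc n; positivity
  let φ : ℕ → E3 → E3 := fun n x => (-(bigBump n x / √(‖G x‖ ^ 2 + c n))) • G x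
  let f : ℕ → E3 → ℝ := fun n x => bigBump n x * (‖G x‖ ^ 2 / √(‖G x‖ ^ 2 + c n))
  have hφ : ∀ n, Adm (φ n) := by
    intro n
    refine ⟨?_, ?_, ?_⟩
    · refine ContDiff.smul (ContDiff.neg (ContDiff.div (bigBump n).contDiff ?_ ?_)) hGC
      · exact ContDiff.sqrt ((hGC.norm_sq ℝ).add contDiff_const) fun x => (hpos n x).ne'
      · exact fun x => (Real.sqrt_pos.2 (hpos n x)).ne'
    · refine (bigBump n).hasCompactSupport.mono ?_
      intro x hx hx'
      apply hx
      simp [φ, hx']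
    · intro x
      simp only [φ, norm_smul, norm_neg, norm_div, Real.norm_eq_abs, abs_of_nonneg (Real.sqrt_nonneg _),
        abs_of_nonneg (bigBump n).nonneg]
      rw [div_mul_eq_mul_div, div_le_one (Real.sqrt_pos.2 (hpos n x))]
      have h1 : ‖G x‖ ≤ √(‖G x‖ ^ 2 + c n) := Real.le_sqrt_of_sq_le (by have := hc n; linarith)
      have h2 := (bigBump n).le_one (x := x)
      nlinarith [norm_nonneg (G x), (bigBump n).nonneg (x := x)]
  have hfφ : ∀ n x, - fderiv ℝ w x (φ n x) = f n x := by
    intro n x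
    simp only [φ, f, hGi, inner_smul_right, real_inner_self_eq_norm_sq]
    ring
  have hf0 : ∀ n x, 0 ≤ f n x := fun n x => by
    have := (bigBump n).nonneg (x := x)
    positivity
  have hfc : ∀ n, Continuous (f n) := fun n => by
    refine (bigBump n).continuous.mul (Continuous.div ?_ ?_ ?_)
    · exact hGC.continuous.norm.pow 2
    · exact ((hGC.continuous.norm.pow 2).add continuous_const).sqrt
    · exact fun x => (Real.sqrt_pos.2 (hpos n x)).ne'
  have hfi : ∀ n, Integrable (f n) := fun n =>
    (hfc n).integrable_of_hasCompactSupport (bigBump n).hasCompactSupport.mul_right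
  have hb : ∀ n, ∫⁻ x, ENNReal.ofReal (f n x) ≤ P := by
    intro n
    rw [← ofReal_integral_eq_lintegral_ofReal (hfi n) (Eventually.of_forall (hf0 n))]
    have := hP (φ n) (hφ n)
    rw [integral_mul_divg (hw.of_le (by norm_num)) (hφ n).1 (hφ n).2.1, ← integral_neg] at this
    simpa only [hfφ] using this
  have hlim : ∀ x, Tendsto (fun n => f n x) atTop (𝓝 ‖G x‖) := by
    intro x
    by_cases h0 : ‖G x‖ = 0
    · simp [f, h0]
    have hc0 : Tendsto c atTop (𝓝 0) := tendsto_one_div_add_atTop_nhds_zero_nat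
    have h1 : Tendsto (fun n => ‖G x‖ ^ 2 / √(‖G x‖ ^ 2 + c n)) atTop
        (𝓝 (‖G x‖ ^ 2 / √(‖G x‖ ^ 2 + 0))) := by
      refine Tendsto.div tendsto_const_nhds ((Tendsto.add tendsto_const_nhds hc0).sqrt) ?_
      rw [add_zero, Real.sqrt_sq (norm_nonneg _)]; exact h0
    have h2 : ‖G x‖ ^ 2 / √(‖G x‖ ^ 2 + 0) = ‖G x‖ := by
      rw [add_zero, Real.sqrt_sq (norm_nonneg _)]; field_simp
    rw [h2] at h1
    refine h1.congr' ?_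
    filter_upwards [eventually_ge_atTop ⌈‖x‖⌉₊] with n hn
    have : bigBump n x = 1 := by
      apply (bigBump n).one_of_mem_closedBall
      simp only [bigBump, mem_closedBall, dist_zero_right]
      have := Nat.ceil_le.1 hn
      linarith
    simp [f, this]
  calc ∫⁻ x, ‖fderiv ℝ w x‖ₑ = ∫⁻ x, liminf (fun n => ENNReal.ofReal (f n x)) atTop := by
        refine lintegral_congr fun x => ?_
        rw [(ENNReal.tendsto_ofReal (hlim x)).liminf_eq, hGn,
          ofReal_norm]
    _ ≤ liminf (fun n => ∫⁻ x, ENNReal.ofReal (f n x)) atTop :=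
        lintegral_liminf_le fun n => (hfc n).measurable.ennreal_ofReal
    _ ≤ P := by
        refine liminf_le_of_le (by isBoundedDefault) ?_
        intro b hb'
        obtain ⟨n, hn⟩ := hb'.exists
        exact hn.trans (hb n)

lemma adm_comp_sub {φ : E3 → E3} (h : Adm φ) (t : E3) : Adm (fun x => φ (x - t)) := by
  refine ⟨h.1.comp (contDiff_id.sub contDiff_const), ?_, fun x => h.2.2 _⟩
  exact h.2.1.comp_homeomorph (Homeomorph.subRight t)

/-- small bumps -/
def smallBump (n : ℕ) : ContDiffBump (0 : E3) :=
  ⟨1 / ((n : ℝ) + 1), 2 * (1 / ((n : ℝ) + 1)), by positivity, by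
    have : 0 < 1 / ((n : ℝ) + 1) := by positivity
    linarith⟩

open ContinuousLinearMap in
lemma approx {A : Set E3} (hA : MeasurableSet A) (hfin : volume A < ⊤) :
    ∃ u : ℕ → E3 → ℝ, (∀ n, ContDiff ℝ 2 (u n)) ∧ (∀ n x, 0 ≤ u n x) ∧ (∀ n x, u n x ≤ 1) ∧
      (∀ n, ∫⁻ x, ‖u n x‖ₑ ≤ volume A) ∧ (∀ n, ∫⁻ x, ‖fderiv ℝ (u n) x‖ₑ ≤ eper A) ∧
      ∀ᵐ x, Tendsto (fun n => u n x) atTop (𝓝 (A.indicator (fun _ => (1 : ℝ)) x)) := by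
  set g : E3 → ℝ := A.indicator (fun _ => (1 : ℝ)) with hg
  have hgi : Integrable g := (integrable_indicator_iff hA).2 (integrableOn_const hfin.ne)
  have hg0 : ∀ x, 0 ≤ g x := fun x => Set.indicator_nonneg (fun _ _ => zero_le_one) x
  have hg1 : ∀ x, g x ≤ 1 := fun x => Set.indicator_le_self' (fun _ _ => zero_le_one) x
  let ρ : ℕ → E3 → ℝ := fun n => (smallBump n).normed volume
  have hρi : ∀ n, Integrable (ρ n) := fun n => (smallBump n).integrable_normed
  have hρ0 : ∀ n x, 0 ≤ ρ n x := fun n x => (smallBump n).nonneg_normed x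
  have hρ1 : ∀ n, ∫ x, ρ n x = 1 := fun n => (smallBump n).integral_normed
  let u : ℕ → E3 → ℝ := fun n => convolution (ρ n) g (lsmul ℝ ℝ) volume
  have hu : ∀ n x, u n x = ∫ t, ρ n t * g (x - t) := fun n x => rfl
  have hC : ∀ n, ContDiff ℝ 2 (u n) := fun n =>
    (smallBump n).hasCompactSupport_normed.contDiff_convolution_left _
      (smallBump n).contDiff_normed hgi.locallyIntegrable
  have hint : ∀ n x, Integrable (fun t => ρ n t * g (x - t)) := by
    intro n x
    refine (hρi n).mul_bdd (c := 1) ?_ ?_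
    · exact (hgi.comp_sub_left x).aestronglyMeasurable
    · exact Eventually.of_forall fun t => by
        rw [Real.norm_eq_abs, abs_of_nonneg (hg0 _)]; exact hg1 _
  have h0 : ∀ n x, 0 ≤ u n x := fun n x => by
    rw [hu]; exact integral_nonneg fun t => mul_nonneg (hρ0 n t) (hg0 _)
  have h1 : ∀ n x, u n x ≤ 1 := fun n x => by
    rw [hu, ← hρ1 n]
    exact integral_mono (hint n x) (hρi n) fun t => mul_le_of_le_one_right (hρ0 n t) (hg1 _)
  refine ⟨u, hC, h0, h1, ?_, ?_, ?_⟩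
  · intro n
    have hui : Integrable (u n) := (hρi n).integrable_convolution _ hgi
    have h2 : ∫ x, u n x = (volume A).toReal := by
      have := integral_convolution (lsmul ℝ ℝ) (hρi n) hgi (μ := (volume : Measure E3)) (ν := (volume : Measure E3))
      rw [hρ1] at this
      simp only [u]
      rw [this]
      simp [hg, integral_indicator hA, Measure.real]
    rw [← ofReal_integral_norm_eq_lintegral_enorm hui]
    simp only [Real.norm_eq_abs, abs_of_nonneg (h0 n _)]
    rw [h2, ENNReal.ofReal_toReal hfin.ne]
  · intro n
    refine tv_le (hC n) fun φ hφ => ?_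
    by_cases ht : eper A = ⊤
    · rw [ht]; exact le_top
    rw [ENNReal.ofReal_le_iff_le_toReal ht]
    have hdi := divg_integrable hφ.1 hφ.2.1
    obtain ⟨C, hCb⟩ := (divg_hasCompactSupport hφ.2.1).exists_bound_of_continuous (divg_continuous hφ.1)
    have hI : Integrable (fun p : E3 × E3 => (ρ n p.2 * g (p.1 - p.2)) * divg φ p.1)
        (volume.prod volume) := by
      refine Integrable.mul_bdd (c := C) ((hρi n).convolution_integrand (lsmul ℝ ℝ) hgi) ?_ ?_
      · exact ((divg_continuous hφ.1).comp continuous_fst).aestronglyMeasurable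
      · exact Eventually.of_forall fun p => hCb _
    have e1 : ∫ x, u n x * divg φ x = ∫ t, ρ n t * ∫ x, g (x - t) * divg φ x := by
      calc ∫ x, u n x * divg φ x = ∫ x, ∫ t, (ρ n t * g (x - t)) * divg φ x := by
            refine integral_congr_ae (Eventually.of_forall fun x => ?_)
            simp only [hu]
            rw [integral_mul_const]
        _ = ∫ t, ∫ x, (ρ n t * g (x - t)) * divg φ x := integral_integral_swap hI
        _ = _ := by
            refine integral_congr_ae (Eventually.of_forall fun t => ?_)
            simp only [mul_assoc]
            rw [integral_const_mul]
    have e2 : ∀ t, ∫ x, g (x - t) * divg φ x ≤ (eper A).toReal := by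
      intro t
      have := le_eper (adm_comp_sub hφ (-t)) A
      rw [ENNReal.ofReal_le_iff_le_toReal ht] at this
      refine le_trans (le_of_eq ?_) this
      rw [← integral_sub_right_eq_self (fun x => _) (-t), ← integral_indicator hA]
      refine integral_congr_ae (Eventually.of_forall fun x => ?_)
      have e3 := divg_comp_sub φ (-t) x
      simp only [sub_neg_eq_add] at e3
      by_cases hx : x ∈ A <;> simp [hg, hx, e3]
    rw [e1]
    calc ∫ t, ρ n t * ∫ x, g (x - t) * divg φ x ≤ ∫ t, ρ n t * (eper A).toReal := by
          refine integral_mono ?_ ((hρi n).mul_const _) fun t =>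
            mul_le_mul_of_nonneg_left (e2 t) (hρ0 n t)
          have := hI.integral_prod_right
          refine this.congr (Eventually.of_forall fun t => ?_)
          simp only [mul_assoc]
          rw [integral_const_mul]
      _ = _ := by rw [integral_mul_const, hρ1, one_mul]
  · refine ContDiffBump.ae_convolution_tendsto_right_of_locallyIntegrable (K := 2) ?_ ?_ hgi.locallyIntegrable
    · have : Tendsto (fun n : ℕ => 2 * (1 / ((n : ℝ) + 1))) atTop (𝓝 (2 * 0)) :=
        tendsto_one_div_add_atTop_nhds_zero_nat.const_mul 2
      simpa [smallBump] using this
    · exact Eventually.of_forall fun n => le_refl _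

/-- translate of a set -/
def tr (K : Set E3) (τ : E3) : Set E3 := {x | x - τ ∈ K}

lemma lintegral_lintegral_sub {a b : E3 → ℝ≥0∞} (ha : Measurable a) (hb : Measurable b) :
    ∫⁻ τ, ∫⁻ x, a x * b (x - τ) = (∫⁻ x, a x) * ∫⁻ y, b y := by
  rw [lintegral_lintegral_swap]
  · have : ∀ x, ∫⁻ τ, a x * b (x - τ) = a x * ∫⁻ y, b y := fun x => by
      rw [lintegral_const_mul _ (by fun_prop),
        lintegral_sub_left_eq_self b x]
    simp_rw [this]
    rw [lintegral_mul_const _ ha]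
  · exact ((ha.comp measurable_snd).mul
      (hb.comp (measurable_snd.sub measurable_fst))).aemeasurable

lemma upper {Ω K : Set E3} (hΩ : MeasurableSet Ω) (hΩf : volume Ω < ⊤)
    (hK : MeasurableSet K) (hKf : volume K < ⊤) :
    ∫⁻ τ, eper (Ω ∩ tr K τ) ≤ eper Ω * volume K + volume Ω * eper K := by
  obtain ⟨u, uC, u0, u1, uI, uD, ut⟩ := approx hΩ hΩf
  obtain ⟨v, vC, v0, v1, vI, vD, vt⟩ := approx hK hKf
  have uC1 : ∀ n, ContDiff ℝ 1 (u n) := fun n => (uC n).of_le (by norm_num)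
  have vC1 : ∀ n, ContDiff ℝ 1 (v n) := fun n => (vC n).of_le (by norm_num)
  have mu : ∀ n, Measurable fun x => ‖u n x‖ₑ := fun n => (uC n).continuous.enorm.measurable
  have mv : ∀ n, Measurable fun x => ‖v n x‖ₑ := fun n => (vC n).continuous.enorm.measurable
  have mdu : ∀ n, Measurable fun x => ‖fderiv ℝ (u n) x‖ₑ := fun n =>
    ((uC1 n).continuous_fderiv one_ne_zero).enorm.measurable
  have mdv : ∀ n, Measurable fun x => ‖fderiv ℝ (v n) x‖ₑ := fun n =>
    ((vC1 n).continuous_fderiv one_ne_zero).enorm.measurable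
  let g1 : ℕ → E3 → ℝ≥0∞ := fun n τ => ∫⁻ x, ‖fderiv ℝ (u n) x‖ₑ * ‖v n (x - τ)‖ₑ
  let g2 : ℕ → E3 → ℝ≥0∞ := fun n τ => ∫⁻ x, ‖u n x‖ₑ * ‖fderiv ℝ (v n) (x - τ)‖ₑ
  have mg : ∀ {a b : E3 → ℝ≥0∞}, Measurable a → Measurable b →
      Measurable fun τ => ∫⁻ x, a x * b (x - τ) := by
    intro a b ha hb
    exact Measurable.lintegral_prod_right' (f := fun p : E3 × E3 => a p.2 * b (p.2 - p.1))
      ((ha.comp measurable_snd).mul (hb.comp (measurable_snd.sub measurable_fst)))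
  have mg1 : ∀ n, Measurable (g1 n) := fun n => mg (mdu n) (mv n)
  have mg2 : ∀ n, Measurable (g2 n) := fun n => mg (mu n) (mdv n)
  have hgI : ∀ n, ∫⁻ τ, (g1 n τ + g2 n τ) ≤ eper Ω * volume K + volume Ω * eper K := by
    intro n
    rw [lintegral_add_left (mg1 n)]
    simp only [g1, g2]
    rw [lintegral_lintegral_sub (mdu n) (mv n), lintegral_lintegral_sub (mu n) (mdv n)]
    exact add_le_add (mul_le_mul' (uD n) (vI n)) (mul_le_mul' (uI n) (vD n))
  have key : ∀ τ, eper (Ω ∩ tr K τ) ≤ liminf (fun n => g1 n τ + g2 n τ) atTop := by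
    intro τ
    refine iSup_le ?_
    rintro ⟨φ, hφ⟩
    have hm : MeasurableSet (Ω ∩ tr K τ) := hΩ.inter ((measurable_id.sub_const τ) hK)
    have vt' : ∀ᵐ x, Tendsto (fun n => v n (x - τ)) atTop
        (𝓝 (K.indicator (fun _ => (1 : ℝ)) (x - τ))) :=
      (measurePreserving_sub_right volume τ).quasiMeasurePreserving.ae vt
    have hlim : Tendsto (fun n => ∫ x, (u n x * v n (x - τ)) * divg φ x) atTop
        (𝓝 (∫ x in Ω ∩ tr K τ, divg φ x)) := by
      rw [← integral_indicator hm]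
      refine tendsto_integral_of_dominated_convergence (fun x => ‖divg φ x‖) ?_
        (divg_integrable hφ.1 hφ.2.1).norm ?_ ?_
      · intro n
        exact (((uC n).continuous.mul ((vC n).continuous.comp (continuous_id.sub continuous_const))).mul
          (divg_continuous hφ.1)).aestronglyMeasurable
      · intro n
        refine Eventually.of_forall fun x => ?_
        rw [norm_mul]
        refine mul_le_of_le_one_left (norm_nonneg _) ?_
        rw [Real.norm_eq_abs, abs_of_nonneg (mul_nonneg (u0 n x) (v0 n _))]
        exact mul_le_one₀ (u1 n x) (v0 n _) (v1 n _)
      · filter_upwards [ut, vt'] with x hx1 hx2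
        have := (hx1.mul hx2).mul_const (divg φ x)
        convert this using 2
        by_cases h1 : x ∈ Ω <;> by_cases h2 : x - τ ∈ K <;> simp [h1, h2, tr]
    rw [← (ENNReal.tendsto_ofReal hlim).liminf_eq]
    refine liminf_le_liminf (Eventually.of_forall fun n => ?_)
    have hvc : ContDiff ℝ 1 (fun x => v n (x - τ)) := (vC1 n).comp (contDiff_id.sub contDiff_const)
    rw [integral_mul_divg ((uC1 n).mul hvc) hφ.1 hφ.2.1, ← integral_neg]
    refine (ENNReal.ofReal_le_ofReal ((Real.le_norm_self _).trans (norm_integral_le_lintegral_norm _))).trans ?_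
    refine ENNReal.ofReal_toReal_le.trans ?_
    simp only [g1, g2]
    have mm : Measurable fun x => ‖fderiv ℝ (u n) x‖ₑ * ‖v n (x - τ)‖ₑ :=
      (mdu n).mul ((mv n).comp (measurable_id.sub_const τ))
    rw [← lintegral_add_left mm]
    refine lintegral_mono fun x => ?_
    rw [ofReal_norm, enorm_neg]
    have hd : fderiv ℝ (fun x => u n x * v n (x - τ)) x =
        u n x • fderiv ℝ (v n) (x - τ) + v n (x - τ) • fderiv ℝ (u n) x := by
      rw [fderiv_fun_mul ((uC1 n).differentiable one_ne_zero x)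
        (hvc.differentiable one_ne_zero x), fderiv_comp_sub]
    calc ‖fderiv ℝ (fun x => u n x * v n (x - τ)) x (φ x)‖ₑ
        ≤ ‖fderiv ℝ (fun x => u n x * v n (x - τ)) x‖ₑ * ‖φ x‖ₑ := ContinuousLinearMap.le_opENorm _ _
      _ ≤ ‖fderiv ℝ (fun x => u n x * v n (x - τ)) x‖ₑ * 1 := by
          gcongr
          rw [← ofReal_norm]
          exact ENNReal.ofReal_le_one.2 (hφ.2.2 x)
      _ = ‖fderiv ℝ (fun x => u n x * v n (x - τ)) x‖ₑ := mul_one _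
      _ ≤ _ := by
          rw [hd]
          refine (enorm_add_le (u n x • fderiv ℝ (v n) (x - τ)) (v n (x - τ) • fderiv ℝ (u n) x)).trans ?_
          rw [enorm_smul, enorm_smul, add_comm, mul_comm (‖v n (x - τ)‖ₑ)]
  calc ∫⁻ τ, eper (Ω ∩ tr K τ) ≤ ∫⁻ τ, liminf (fun n => g1 n τ + g2 n τ) atTop := lintegral_mono key
    _ ≤ liminf (fun n => ∫⁻ τ, (g1 n τ + g2 n τ)) atTop :=
        lintegral_liminf_le fun n => (mg1 n).add (mg2 n)
    _ ≤ _ := by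
        refine liminf_le_of_le (by isBoundedDefault) ?_
        intro b hb'
        obtain ⟨n, hn⟩ := hb'.exists
        exact hn.trans (hgI n)

open scoped Manifold ContDiff in
lemma cutoff {K : Set E3} (hK : IsOpen K) (hKf : volume K < ⊤) {ε : ℝ} (hε : 0 < ε) :
    ∃ χ : E3 → ℝ, ContDiff ℝ 1 χ ∧ HasCompactSupport χ ∧ tsupport χ ⊆ K ∧ (∀ x, 0 ≤ χ x) ∧
      (∀ x, χ x ≤ 1) ∧ (volume K).toReal - ε ≤ ∫ x, χ x := by
  by_cases h0 : volume K = 0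
  · refine ⟨fun _ => 0, contDiff_const, HasCompactSupport.zero, ?_, by simp, by simp, ?_⟩
    · have : tsupport (fun _ : E3 => (0 : ℝ)) = ∅ := tsupport_eq_empty_iff.2 rfl
      rw [this]; exact empty_subset _
    · simp [h0, hε.le]
  obtain ⟨C, hCK, hC, hCv⟩ := hK.exists_lt_isCompact
    (show volume K - ENNReal.ofReal ε < volume K from
      ENNReal.sub_lt_self hKf.ne h0 (by simpa using hε))
  obtain ⟨L, hL, hCL, hLK⟩ := exists_compact_between hC hK hCK
  obtain ⟨f, h1, h2, h3⟩ := exists_contMDiffMap_one_nhds_of_subset_interior 𝓘(ℝ, E3) (n := 1)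
    hC.isClosed hCL
  have hfc : ContDiff ℝ 1 f := f.contMDiff.contDiff
  have hts : tsupport f ⊆ L := by
    refine closure_minimal ?_ hL.isClosed
    intro x hx
    by_contra h
    exact hx (h2 x h)
  have hcs : HasCompactSupport f := hL.of_isClosed_subset (isClosed_tsupport _) hts
  refine ⟨f, hfc, hcs, hts.trans hLK, fun x => (h3 x).1, fun x => (h3 x).2, ?_⟩
  have hCf : volume C < ⊤ := hC.measure_lt_top
  have e1 : (volume C).toReal ≤ ∫ x, f x := by
    have : (volume C).toReal = ∫ x, C.indicator (fun _ => (1 : ℝ)) x := by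
      rw [integral_indicator hC.measurableSet]; simp [Measure.real]
    rw [this]
    refine integral_mono ((integrable_indicator_iff hC.measurableSet).2 (integrableOn_const hCf.ne))
      (hfc.continuous.integrable_of_hasCompactSupport hcs) fun x => ?_
    by_cases hx : x ∈ C
    · simp [hx, h1.self_of_nhdsSet x hx]
    · simp [hx, (h3 x).1]
  have e2 : (volume K).toReal ≤ (volume C).toReal + ε := by
    have := tsub_le_iff_right.1 hCv.le
    have := ENNReal.toReal_mono (by finiteness) this
    rwa [ENNReal.toReal_add hCf.ne (by simp), ENNReal.toReal_ofReal hε.le] at this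
  linarith

lemma prod_integrable {g k : E3 → ℝ} (hg : Integrable g) (hk : Integrable k) :
    Integrable (fun p : E3 × E3 => g p.2 * k (p.2 - p.1)) (volume.prod volume) := by
  have := hg.convolution_integrand (ContinuousLinearMap.mul ℝ ℝ) hk.comp_neg
    (μ := (volume : Measure E3)) (ν := (volume : Measure E3))
  refine this.congr (Eventually.of_forall fun p => ?_)
  simp

lemma ofReal_integral_le' {T : E3 → ℝ} (hT : Integrable T) :
    ENNReal.ofReal (∫ x, T x) ≤ ∫⁻ x, ENNReal.ofReal (T x) := by
  rw [integral_eq_lintegral_pos_part_sub_lintegral_neg_part hT]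
  refine le_trans (ENNReal.ofReal_le_ofReal (sub_le_self _ ENNReal.toReal_nonneg)) ?_
  exact ENNReal.ofReal_toReal_le

lemma pre_smooth {χ : E3 → ℝ} (χC : ContDiff ℝ 1 χ) {N : E3 → E3} (hN : Adm N) :
    ContDiff ℝ 1 (fun y => (1 - χ y) • N y) ∧ HasCompactSupport (fun y => (1 - χ y) • N y) := by
  have h1 : ContDiff ℝ 1 (fun y => 1 - χ y) := contDiff_const.sub χC
  exact ⟨h1.smul hN.1, hN.2.1.smul_left (f := fun y => 1 - χ y)⟩

lemma pre_int {K : Set E3} {χ : E3 → ℝ} (χC : ContDiff ℝ 1 χ)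
    (χS : HasCompactSupport χ) (χz : ∀ x, x ∉ K → χ x = 0) (dχz : ∀ x, x ∉ K → fderiv ℝ χ x = 0)
    {N : E3 → E3} (hN : Adm N) :
    ∫ x in K, divg (fun y => (1 - χ y) • N y) x = ∫ x in K, divg N x := by
  have c1 : ContDiff ℝ 1 (fun y => 1 - χ y) := contDiff_const.sub χC
  have c2 : ContDiff ℝ 1 (fun y => χ y • N y) := χC.smul hN.1
  have c3 : HasCompactSupport (fun y => χ y • N y) := hN.2.1.smul_left (f := χ)
  have e0 : ∫ x in K, divg (fun y => χ y • N y) x = 0 := by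
    rw [setIntegral_eq_integral_of_forall_compl_eq_zero]
    · exact integral_divg_zero c2 c3
    · intro x hx
      rw [divg_smul (χC.differentiable one_ne_zero x) (hN.1.differentiable one_ne_zero x),
        χz x hx, dχz x hx]
      simp
  have e1 : ∀ x, divg (fun y => (1 - χ y) • N y) x = divg N x - divg (fun y => χ y • N y) x := by
    intro x
    rw [divg_smul (χC.differentiable one_ne_zero x) (hN.1.differentiable one_ne_zero x),
      divg_smul (c1.differentiable one_ne_zero x) (hN.1.differentiable one_ne_zero x)]
    have : fderiv ℝ (fun y => 1 - χ y) x = - fderiv ℝ χ x := fderiv_const_sub 1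
    rw [this]
    simp only [_root_.neg_apply]
    ring
  simp_rw [e1]
  rw [integral_sub, e0, sub_zero]
  · exact (divg_integrable hN.1 hN.2.1).integrableOn
  · exact (divg_integrable c2 c3).integrableOn

lemma pre_adm {χ : E3 → ℝ} (χC : ContDiff ℝ 1 χ)
    (χ0 : ∀ x, 0 ≤ χ x) (χ1 : ∀ x, χ x ≤ 1)
    {ψ N : E3 → E3} (hψ : Adm ψ) (hN : Adm N) (τ : E3) :
    Adm (fun x => χ (x - τ) • ψ x + (1 - χ (x - τ)) • N (x - τ)) := by
  have c1 : ContDiff ℝ 1 (fun x => χ (x - τ)) := χC.comp (contDiff_id.sub contDiff_const)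
  obtain ⟨a, b⟩ := pre_smooth χC hN
  have c2 : ContDiff ℝ 1 (fun x => (1 - χ (x - τ)) • N (x - τ)) :=
    a.comp (contDiff_id.sub contDiff_const)
  have c3 : HasCompactSupport (fun x => (1 - χ (x - τ)) • N (x - τ)) :=
    b.comp_homeomorph (Homeomorph.subRight τ)
  have c4 : HasCompactSupport (fun x => χ (x - τ) • ψ x) :=
    hψ.2.1.smul_left (f := fun x => χ (x - τ))
  refine ⟨(c1.smul hψ.1).add c2, HasCompactSupport.add c4 c3, fun x => ?_⟩
  have h1 := χ0 (x - τ)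
  have h2 := χ1 (x - τ)
  calc ‖χ (x - τ) • ψ x + (1 - χ (x - τ)) • N (x - τ)‖
      ≤ ‖χ (x - τ) • ψ x‖ + ‖(1 - χ (x - τ)) • N (x - τ)‖ := norm_add_le _ _
    _ = χ (x - τ) * ‖ψ x‖ + (1 - χ (x - τ)) * ‖N (x - τ)‖ := by
        rw [norm_smul, norm_smul, Real.norm_eq_abs, Real.norm_eq_abs, abs_of_nonneg h1,
          abs_of_nonneg (by linarith)]
    _ ≤ χ (x - τ) * 1 + (1 - χ (x - τ)) * 1 :=
        add_le_add (mul_le_mul_of_nonneg_left (hψ.2.2 x) h1)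
          (mul_le_mul_of_nonneg_left (hN.2.2 _) (by linarith))
    _ = 1 := by ring

lemma lower_core {Ω K : Set E3} (hΩ : MeasurableSet Ω) (hΩf : volume Ω < ⊤)
    (hK : MeasurableSet K) {χ : E3 → ℝ} (χC : ContDiff ℝ 1 χ)
    (χS : HasCompactSupport χ) (χK : tsupport χ ⊆ K) (χ0 : ∀ x, 0 ≤ χ x) (χ1 : ∀ x, χ x ≤ 1)
    {ψ N : E3 → E3} (hψ : Adm ψ) (hN : Adm N) :
    ENNReal.ofReal ((∫ x, χ x) * (∫ x in Ω, divg ψ x) + (volume Ω).toReal * ∫ x in K, divg N x)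
      ≤ ∫⁻ τ, eper (Ω ∩ tr K τ) := by
  have χi : Integrable χ := χC.continuous.integrable_of_hasCompactSupport χS
  have χz : ∀ x, x ∉ K → χ x = 0 := fun x hx => image_eq_zero_of_notMem_tsupport fun h => hx (χK h)
  have dχz : ∀ x, x ∉ K → fderiv ℝ χ x = 0 := fun x hx => fderiv_of_notMem_tsupport ℝ fun h => hx (χK h)
  have dχi : ∀ v, Integrable (fun y => fderiv ℝ χ y v) := fun v =>
    ((χC.continuous_fderiv one_ne_zero).clm_apply continuous_const).integrable_of_hasCompactSupport
      (χS.fderiv_apply (𝕜 := ℝ) v)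
  obtain ⟨N', N'C, N'S, hKN, hφ⟩ : ∃ N' : E3 → E3, ContDiff ℝ 1 N' ∧ HasCompactSupport N' ∧
      ∫ x in K, divg N' x = ∫ x in K, divg N x ∧
      ∀ τ, Adm (fun x => χ (x - τ) • ψ x + N' (x - τ)) :=
    ⟨fun y => (1 - χ y) • N y, (pre_smooth χC hN).1, (pre_smooth χC hN).2,
      pre_int χC χS χz dχz hN, pre_adm χC χ0 χ1 hψ hN⟩
  have χτC : ∀ τ, ContDiff ℝ 1 (fun x => χ (x - τ)) := fun τ => χC.comp (contDiff_id.sub contDiff_const)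
  have N'τC : ∀ τ, ContDiff ℝ 1 (fun x => N' (x - τ)) := fun τ => N'C.comp (contDiff_id.sub contDiff_const)
  obtain ⟨φ, hφe⟩ : ∃ φ : E3 → E3 → E3, φ = fun τ x => χ (x - τ) • ψ x + N' (x - τ) := ⟨_, rfl⟩
  replace hφ : ∀ τ, Adm (φ τ) := fun τ => by rw [hφe]; exact hφ τ
  have hdiv : ∀ τ x, divg (φ τ) x = (∑ i, ψ x i * fderiv ℝ χ (x - τ) (bv i)) +
      divg ψ x * χ (x - τ) + divg N' (x - τ) := by
    intro τ x
    have d1 := (χτC τ).differentiable one_ne_zero x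
    have d2 := hψ.1.differentiable one_ne_zero x
    have d3 : DifferentiableAt ℝ (fun y => χ (y - τ) • ψ y) x := d1.smul d2
    simp only [hφe]
    rw [divg_add d3 ((N'τC τ).differentiable one_ne_zero x), divg_smul d1 d2,
      divg_comp_sub, fderiv_comp_sub]
    have : fderiv ℝ χ (x - τ) (ψ x) = ∑ i, ψ x i * fderiv ℝ χ (x - τ) (bv i) := by
      conv_lhs => rw [← (EuclideanSpace.basisFun (Fin 3) ℝ).sum_repr (ψ x)]
      rw [map_sum]
      refine Finset.sum_congr rfl fun i _ => ?_
      rw [map_smul]; simp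
    rw [this]; ring
  let ia : Fin 3 → E3 → ℝ := fun i => Ω.indicator fun x => ψ x i
  let ib : E3 → ℝ := Ω.indicator (divg ψ)
  let ic : E3 → ℝ := Ω.indicator fun _ => 1
  let kc : E3 → ℝ := K.indicator (divg N')
  have iai : ∀ i, Integrable (ia i) := fun i => by
    refine Integrable.indicator ?_ hΩ
    have hc : Continuous fun x => ψ x i := by have := hψ.1.continuous; fun_prop
    exact hc.integrable_of_hasCompactSupport (hψ.2.1.comp_left (g := fun y : E3 => y i) rfl)
  have ibi : Integrable ib := (divg_integrable hψ.1 hψ.2.1).indicator hΩ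
  have ici : Integrable ic := (integrable_indicator_iff hΩ).2 (integrableOn_const hΩf.ne)
  have kci : Integrable kc := (divg_integrable N'C N'S).indicator hK
  let F : E3 × E3 → ℝ := fun p => (∑ i, ia i p.2 * fderiv ℝ χ (p.2 - p.1) (bv i)) +
      ib p.2 * χ (p.2 - p.1) + ic p.2 * kc (p.2 - p.1)
  have hF : Integrable F (volume.prod volume) := by
    refine Integrable.add (Integrable.add (integrable_finsetSum _ fun i _ => ?_) ?_) ?_
    · exact prod_integrable (iai i) (dχi _)
    · exact prod_integrable ibi χi
    · exact prod_integrable ici kci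
  have hT : ∀ τ, ∫ x in Ω ∩ tr K τ, divg (φ τ) x = ∫ x, F (τ, x) := by
    intro τ
    have hm : MeasurableSet (Ω ∩ tr K τ) := hΩ.inter ((measurable_id.sub_const τ) hK)
    rw [← integral_indicator hm]
    refine integral_congr_ae (Eventually.of_forall fun x => ?_)
    simp only [F, ia, ib, ic, kc]
    by_cases h1 : x ∈ Ω
    · by_cases h2 : x - τ ∈ K
      · have : x ∈ Ω ∩ tr K τ := ⟨h1, h2⟩
        simp only [indicator_of_mem this, indicator_of_mem h1, indicator_of_mem h2, hdiv, one_mul]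
      · have : x ∉ Ω ∩ tr K τ := fun h => h2 h.2
        simp [this, h2, χz _ h2, dχz _ h2]
    · have : x ∉ Ω ∩ tr K τ := fun h => h1 h.1
      simp [this, h1]
  have hTi : Integrable (fun τ => ∫ x in Ω ∩ tr K τ, divg (φ τ) x) := by
    simp_rw [hT]; exact hF.integral_prod_left
  have hval : ∫ τ, ∫ x in Ω ∩ tr K τ, divg (φ τ) x =
      (∫ x, χ x) * (∫ x in Ω, divg ψ x) + (volume Ω).toReal * ∫ x in K, divg N x := by
    simp_rw [hT]
    rw [integral_integral_swap hF]
    have inner : ∀ x, ∫ τ, F (τ, x) = ib x * (∫ y, χ y) + ic x * ∫ y in K, divg N y := by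
      intro x
      have j1 : ∀ i, Integrable (fun τ => ia i x * fderiv ℝ χ (x - τ) (bv i)) := fun i =>
        ((dχi (bv i)).comp_sub_left x).const_mul _
      have j2 : Integrable (fun τ => ib x * χ (x - τ)) := (χi.comp_sub_left x).const_mul _
      have j3 : Integrable (fun τ => ic x * kc (x - τ)) := (kci.comp_sub_left x).const_mul _
      simp only [F]
      have j4 : Integrable (fun τ => ∑ i, ia i x * fderiv ℝ χ (x - τ) (bv i)) :=
        integrable_finsetSum _ fun i _ => j1 i
      have j5 : Integrable (fun τ => (∑ i, ia i x * fderiv ℝ χ (x - τ) (bv i)) + ib x * χ (x - τ)) :=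
        j4.add j2
      rw [integral_add j5 j3, integral_add j4 j2, integral_finsetSum _ fun i _ => j1 i]
      simp only [integral_const_mul]
      rw [integral_sub_left_eq_self χ volume x, integral_sub_left_eq_self kc volume x]
      have z : ∀ i, ∫ τ, fderiv ℝ χ (x - τ) (bv i) = 0 := fun i => by
        rw [integral_sub_left_eq_self (fun y => fderiv ℝ χ y (bv i)) volume x]
        exact integral_fderiv_zero χC χS _
      simp only [z, mul_zero, Finset.sum_const_zero, zero_add]
      simp only [kc]
      rw [integral_indicator hK, hKN]
    simp_rw [inner]
    rw [integral_add (ibi.mul_const _) (ici.mul_const _), integral_mul_const, integral_mul_const]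
    simp only [ib, ic]
    rw [integral_indicator hΩ, integral_indicator hΩ]
    simp [Measure.real, mul_comm]
  rw [← hval]
  exact (ofReal_integral_le' hTi).trans (lintegral_mono fun τ => le_eper (hφ τ) _)

lemma lower {Ω K : Set E3} (hΩ : MeasurableSet Ω) (hΩf : volume Ω < ⊤)
    (hK : IsOpen K) (hKf : volume K < ⊤) (pΩ : HasFinPer Ω) (pK : HasFinPer K) :
    ENNReal.ofReal (per Ω * (volume K).toReal + (volume Ω).toReal * per K) ≤
      ∫⁻ τ, eper (Ω ∩ tr K τ) := by
  by_cases ht : ∫⁻ τ, eper (Ω ∩ tr K τ) = ⊤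
  · rw [ht]; exact le_top
  rw [ENNReal.ofReal_le_iff_le_toReal ht]
  set I := (∫⁻ τ, eper (Ω ∩ tr K τ)).toReal with hI
  have h1 : ∀ a ∈ perCand Ω, ∀ b ∈ perCand K, 0 ≤ a →
      a * (volume K).toReal + (volume Ω).toReal * b ≤ I := by
    intro a ha b hb ha0
    obtain ⟨ψ, hψ, rfl⟩ := mem_perCand.1 ha
    obtain ⟨N, hN, rfl⟩ := mem_perCand.1 hb
    have hε : ∀ ε > 0, (∫ x in Ω, divg ψ x) * ((volume K).toReal - ε) +
        (volume Ω).toReal * (∫ x in K, divg N x) ≤ I := by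
      intro ε hε
      obtain ⟨χ, χC, χS, χK, χ0, χ1, hχ⟩ := cutoff hK hKf hε
      have := lower_core hΩ hΩf hK.measurableSet χC χS χK χ0 χ1 hψ hN
      rw [ENNReal.ofReal_le_iff_le_toReal ht] at this
      have h2 := mul_le_mul_of_nonneg_left hχ ha0
      rw [← hI] at this
      linarith
    have hl : Tendsto (fun ε : ℝ => (∫ x in Ω, divg ψ x) * ((volume K).toReal - ε) +
        (volume Ω).toReal * (∫ x in K, divg N x)) (𝓝[>] 0) (𝓝 ((∫ x in Ω, divg ψ x) * ((volume K).toReal - 0) +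
        (volume Ω).toReal * (∫ x in K, divg N x))) :=
      tendsto_nhdsWithin_of_tendsto_nhds (Continuous.tendsto (by fun_prop) 0)
    have := le_of_tendsto hl (eventually_mem_nhdsWithin.mono fun ε h => hε ε h)
    simpa using this
  have h2 : ∀ a ∈ perCand Ω, ∀ b ∈ perCand K,
      a * (volume K).toReal + (volume Ω).toReal * b ≤ I := by
    intro a ha b hb
    rcases le_total 0 a with h | h
    · exact h1 a ha b hb h
    · have := h1 0 (zero_mem_perCand _) b hb le_rfl
      have h3 := mul_nonpos_of_nonpos_of_nonneg h (ENNReal.toReal_nonneg (a := volume K))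
      linarith
  obtain ⟨a, -, ha, ha'⟩ := exists_seq_tendsto_sSup ⟨0, zero_mem_perCand Ω⟩ pΩ
  obtain ⟨b, -, hb, hb'⟩ := exists_seq_tendsto_sSup ⟨0, zero_mem_perCand K⟩ pK
  exact le_of_tendsto' ((ha.mul_const _).add (hb.const_mul _)) fun n => h2 _ (ha' n) _ (hb' n)

lemma meas_eper {Ω K : Set E3} (hΩ : MeasurableSet Ω) (hK : MeasurableSet K)
    (hKc : Convex ℝ K) : Measurable fun τ => eper (Ω ∩ tr K τ) := by
  refine LowerSemicontinuous.measurable ?_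
  unfold eper
  refine lowerSemicontinuous_iSup fun φ => Continuous.lowerSemicontinuous ?_
  refine ENNReal.continuous_ofReal.comp ?_
  have hm : ∀ τ, MeasurableSet (Ω ∩ tr K τ) := fun τ =>
    hΩ.inter ((measurable_id.sub_const τ) hK)
  have hi := divg_integrable φ.2.1 φ.2.2.1
  have e : ∀ τ, ∫ x in Ω ∩ tr K τ, divg φ.1 x = ∫ x, (Ω ∩ tr K τ).indicator (divg φ.1) x :=
    fun τ => (integral_indicator (hm τ)).symm
  simp_rw [e]
  rw [continuous_iff_continuousAt]
  intro τ₀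
  refine continuousAt_of_dominated (bound := fun x => ‖divg φ.1 x‖) ?_ ?_ hi.norm ?_
  · exact Eventually.of_forall fun τ => (hi.indicator (hm τ)).aestronglyMeasurable
  · exact Eventually.of_forall fun τ => Eventually.of_forall fun x =>
      norm_indicator_le_norm_self _ _
  · have h0 : ∀ᵐ y : E3, y ∉ frontier K := by
      rw [ae_iff]; simpa using hKc.addHaar_frontier (volume : Measure E3)
    have h1 : ∀ᵐ x : E3, x - τ₀ ∉ frontier K :=
      (measurePreserving_sub_right volume τ₀).quasiMeasurePreserving.ae h0
    filter_upwards [h1] with x hx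
    have hc : Continuous fun τ : E3 => x - τ := by fun_prop
    rw [frontier, Set.mem_sdiff, not_and, not_not] at hx
    by_cases hxi : x - τ₀ ∈ interior K
    · have : ∀ᶠ τ in 𝓝 τ₀, x - τ ∈ interior K :=
        hc.continuousAt.eventually_mem (isOpen_interior.mem_nhds hxi)
      refine ContinuousAt.congr (f := fun _ => Ω.indicator (divg φ.1) x) continuousAt_const ?_
      filter_upwards [this] with τ hτ
      have h2 : x ∈ tr K τ := (interior_subset hτ : x - τ ∈ K)
      by_cases h3 : x ∈ Ω <;> simp [h2, h3]
    · have h4 : x - τ₀ ∈ (closure K)ᶜ := fun h => hxi (hx h)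
      have : ∀ᶠ τ in 𝓝 τ₀, x - τ ∈ (closure K)ᶜ :=
        hc.continuousAt.eventually_mem (isClosed_closure.isOpen_compl.mem_nhds h4)
      refine ContinuousAt.congr (f := fun _ => 0) continuousAt_const ?_
      filter_upwards [this] with τ hτ
      have h2 : x ∉ tr K τ := fun h => hτ (subset_closure h)
      simp [h2]

lemma diff_bound {f : E3 → ℝ} (hf : Integrable f) (h1 : ∀ x, |f x| ≤ 1) {A B H : Set E3}
    (hA : MeasurableSet A) (hB : MeasurableSet B) (hH : MeasurableSet H)
    (hAH : A ⊆ H) (hBH : B ⊆ H) (hHf : volume H < ⊤) :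
    (∫ x in A, f x) - ∫ x in B, f x ≤
      2 * (volume H).toReal - (volume A).toReal - (volume B).toReal := by
  have key : ∀ S : Set E3, MeasurableSet S → S ⊆ H →
      |(∫ x in H, f x) - ∫ x in S, f x| ≤ (volume H).toReal - (volume S).toReal := by
    intro S hS hSH
    have hSf : volume S ≠ ⊤ := ((measure_mono hSH).trans_lt hHf).ne
    have e : (∫ x in H, f x) - ∫ x in S, f x = ∫ x in H \ S, f x := by
      rw [setIntegral_sdiff hS hf.integrableOn hSH]
    rw [e]
    have hd : volume (H \ S) < ⊤ := (measure_mono sdiff_subset).trans_lt hHf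
    have := norm_setIntegral_le_of_norm_le_const (f := f) (C := 1) hd (fun x _ => h1 x)
    rw [Real.norm_eq_abs, one_mul] at this
    refine this.trans_eq ?_
    rw [Measure.real, measure_sdiff hSH hS.nullMeasurableSet hSf,
      ENNReal.toReal_sub_of_le (measure_mono hSH) hHf.ne]
  have a := abs_le.1 (key A hA hAH)
  have b := abs_le.1 (key B hB hBH)
  linarith [a.1, a.2, b.1, b.2]

lemma convex_fderiv_bound {K : Set E3} (hKo : IsOpen K) (hKc : Convex ℝ K) (hKf : volume K < ⊤)
    {c : E3} {r : ℝ} (hr : 0 < r) (hcr : closedBall c r ⊆ K) {f : E3 → ℝ} (fC : ContDiff ℝ 1 f)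
    (fS : HasCompactSupport f) (f1 : ∀ x, |f x| ≤ 1) {e : E3} (he : ‖e‖ = 1) :
    ∫ x in K, fderiv ℝ f x e ≤ 14 / r * (volume K).toReal := by
  have fi : Integrable f := fC.continuous.integrable_of_hasCompactSupport fS
  obtain ⟨C, hC⟩ := fC.lipschitzWith_of_hasCompactSupport fS one_ne_zero
  let a : ℕ → ℝ := fun n => ((n : ℝ) + 1) / r
  have a0 : ∀ n, 0 < a n := fun n => by positivity
  have hlim : Tendsto (fun n => ∫ x in K, a n • (f (x + (a n)⁻¹ • e) - f x)) atTop
      (𝓝 (∫ x in K, fderiv ℝ f x e)) := by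
    refine tendsto_integral_of_dominated_convergence (fun _ => (C : ℝ)) ?_
      (integrableOn_const hKf.ne) ?_ ?_
    · intro n
      refine Continuous.aestronglyMeasurable ?_
      have := fC.continuous
      fun_prop
    · intro n
      refine Eventually.of_forall fun x => ?_
      have := hC.dist_le_mul (x + (a n)⁻¹ • e) x
      rw [dist_eq_norm, dist_eq_norm, add_sub_cancel_left, norm_smul, he, mul_one, norm_inv,
        Real.norm_of_nonneg (a0 n).le] at this
      rw [norm_smul, Real.norm_of_nonneg (a0 n).le]
      calc a n * ‖f (x + (a n)⁻¹ • e) - f x‖ ≤ a n * (C * (a n)⁻¹) :=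
            mul_le_mul_of_nonneg_left this (a0 n).le
        _ = C := by have := (a0 n).ne'; field_simp
    · refine Eventually.of_forall fun x => ?_
      refine (fC.differentiable one_ne_zero x).hasFDerivAt.lim e ?_
      simp_rw [Real.norm_of_nonneg (a0 _).le]
      exact (tendsto_atTop_add_const_right _ _ tendsto_natCast_atTop_atTop).atTop_div_const hr
  refine le_of_tendsto' hlim fun n => ?_
  let s : ℝ := 1 / ((n : ℝ) + 1)
  have s0 : 0 < s := by positivity
  have s1 : s ≤ 1 := by
    rw [div_le_one (by positivity)]; linarith [(Nat.cast_nonneg n : (0 : ℝ) ≤ n)]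
  have hs : (a n)⁻¹ = s * r := by simp only [a, s]; field_simp
  have ha : a n = 1 / (s * r) := by rw [← hs]; simp
  set t := (a n)⁻¹ with ht
  let H : Set E3 := AffineMap.homothety c (1 + s) '' K
  have hH : IsOpen H := by
    refine (AffineMap.homothety_isOpenMap c (1 + s) (by positivity)) K hKo
  have hHv : volume H = ENNReal.ofReal ((1 + s) ^ 3) * volume K := by
    rw [Measure.addHaar_image_homothety]
    simp [abs_of_pos (show 0 < 1 + s by positivity)]
  have hHf : volume H < ⊤ := by rw [hHv]; exact ENNReal.mul_lt_top (by simp) hKf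
  have conv : ∀ x ∈ K, ∀ z ∈ K, x + s • (z - c) ∈ H := by
    intro x hx z hz
    refine ⟨(1 / (1 + s)) • x + (s / (1 + s)) • z,
      hKc hx hz (by positivity) (by positivity) (by field_simp), ?_⟩
    rw [AffineMap.homothety_apply]
    simp only [vsub_eq_sub, vadd_eq_add, smul_sub, smul_add, smul_smul]
    have h1 : (1 + s) * (1 / (1 + s)) = 1 := by field_simp
    have h2 : (1 + s) * (s / (1 + s)) = s := by field_simp
    rw [h1, h2]
    module
  have cK : c ∈ K := hcr (mem_closedBall_self hr.le)
  have KH : K ⊆ H := fun x hx => by simpa using conv x hx c cK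
  have trH : tr K (t • e) ⊆ H := fun x hx => by
    have h3 : c + r • e ∈ K := hcr (by simp [norm_smul, he, abs_of_pos hr])
    have := conv _ hx _ h3
    simpa [smul_smul, ← hs] using this
  have trm : MeasurableSet (tr K (t • e)) := (measurable_id.sub_const _) hKo.measurableSet
  have mp := measurePreserving_sub_right (volume : Measure E3) (t • e)
  have trv : volume (tr K (t • e)) = volume K :=
    mp.measure_preimage hKo.measurableSet.nullMeasurableSet
  have shift : ∫ x in K, f (x + t • e) = ∫ x in tr K (t • e), f x := by
    rw [← integral_indicator hKo.measurableSet, ← integral_indicator trm,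
      ← integral_sub_right_eq_self _ (t • e)]
    refine integral_congr_ae (Eventually.of_forall fun x => ?_)
    by_cases h : x - t • e ∈ K
    · have : x ∈ tr K (t • e) := h
      simp [h, this]
    · have : x ∉ tr K (t • e) := h
      simp [h, this]
  have db := diff_bound fi f1 trm hKo.measurableSet hH.measurableSet trH KH hHf
  rw [trv, hHv, ENNReal.toReal_mul, ENNReal.toReal_ofReal (by positivity)] at db
  rw [integral_smul, integral_sub (fi.comp_add_right _).integrableOn fi.integrableOn, shift]
  have v0 : 0 ≤ (volume K).toReal := ENNReal.toReal_nonneg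
  have p : 2 * ((1 + s) ^ 3 * (volume K).toReal) - (volume K).toReal - (volume K).toReal ≤
      14 * s * (volume K).toReal := by
    have : (1 + s) ^ 3 ≤ 1 + 7 * s := by nlinarith [mul_nonneg s0.le (sub_nonneg.2 s1), mul_nonneg (mul_nonneg s0.le s0.le) (sub_nonneg.2 s1)]
    nlinarith [mul_le_mul_of_nonneg_right this v0]
  calc a n • ((∫ x in tr K (t • e), f x) - ∫ x in K, f x) ≤ a n * (14 * s * (volume K).toReal) :=
        mul_le_mul_of_nonneg_left (db.trans p) (a0 n).le
    _ = 14 / r * (volume K).toReal := by rw [ha]; field_simp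

lemma hasFinPer_convex {K : Set E3} (hKo : IsOpen K) (hKc : Convex ℝ K) (hKf : volume K < ⊤)
    (hne : K.Nonempty) : HasFinPer K := by
  obtain ⟨c, hc⟩ := hne
  obtain ⟨r, hr, hcr⟩ := nhds_basis_closedBall.mem_iff.1 (hKo.mem_nhds hc)
  refine ⟨3 * (14 / r * (volume K).toReal), ?_⟩
  intro b hb
  obtain ⟨φ, hφ, rfl⟩ := mem_perCand.1 hb
  have cC : ∀ i, ContDiff ℝ 1 (fun y => φ y i) := fun i =>
    (EuclideanSpace.proj i : E3 →L[ℝ] ℝ).contDiff.comp hφ.1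
  have cS : ∀ i, HasCompactSupport (fun y => φ y i) := fun i =>
    hφ.2.1.comp_left (g := fun y : E3 => y i) rfl
  have key : ∀ x, divg φ x = ∑ i, fderiv ℝ (fun y => φ y i) x (bv i) := by
    intro x
    rw [divg_eq_sum]
    refine Finset.sum_congr rfl fun i _ => ?_
    have := ((EuclideanSpace.proj i : E3 →L[ℝ] ℝ).hasFDerivAt.comp x
      (hφ.1.differentiable one_ne_zero x).hasFDerivAt).fderiv
    have h2 : fderiv ℝ (fun y => φ y i) x =
      (EuclideanSpace.proj i : E3 →L[ℝ] ℝ).comp (fderiv ℝ φ x) := this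
    rw [h2]; simp
  simp_rw [key]
  rw [integral_finsetSum]
  · calc _ ≤ ∑ i : Fin 3, 14 / r * (volume K).toReal := by
          refine Finset.sum_le_sum fun i _ => ?_
          refine convex_fderiv_bound hKo hKc hKf hr hcr (cC i) (cS i) (fun x => ?_) ?_
          · exact (PiLp.norm_apply_le (φ x) i).trans (hφ.2.2 x)
          · simp [bv]
      _ = _ := by simp
  · intro i _
    exact (((cC i).continuous_fderiv one_ne_zero).clm_apply
      continuous_const).integrable_of_hasCompactSupport
      ((cS i).fderiv_apply (𝕜 := ℝ) _) |>.integrableOn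

lemma perCand_isom (U : E3 ≃ₗᵢ[ℝ] E3) (S : Set E3) : perCand (U '' S) ⊆ perCand S := by
  intro a ha
  obtain ⟨φ, hφ, rfl⟩ := mem_perCand.1 ha
  refine mem_perCand.2 ⟨fun x => U.symm (φ (U x)), ⟨?_, ?_, ?_⟩, ?_⟩
  · exact U.symm.contDiff.comp (hφ.1.comp U.contDiff)
  · have h1 : HasCompactSupport (fun x => φ (U x)) := hφ.2.1.comp_homeomorph U.toHomeomorph
    exact h1.comp_left (g := U.symm) (map_zero _)
  · intro x; simpa using hφ.2.2 (U x)
  · rw [U.measurePreserving.setIntegral_image_emb U.toHomeomorph.measurableEmbedding]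
    have e : ∀ x, divg (fun x => U.symm (φ (U x))) x = divg φ (U x) := by
      intro x
      have d := (hφ.1.differentiable one_ne_zero (U x)).hasFDerivAt
      have dU : HasFDerivAt U (U.toContinuousLinearEquiv : E3 →L[ℝ] E3) x :=
        U.toContinuousLinearEquiv.hasFDerivAt
      have dV : HasFDerivAt U.symm (U.symm.toContinuousLinearEquiv : E3 →L[ℝ] E3) (φ (U x)) :=
        U.symm.toContinuousLinearEquiv.hasFDerivAt
      have h := (dV.comp x (d.comp x dU)).fderiv
      have h' : fderiv ℝ (fun x => U.symm (φ (U x))) x = _ := h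
      simp only [divg]
      rw [h']
      rw [← LinearMap.trace_conj' (fderiv ℝ φ (U x) : E3 →ₗ[ℝ] E3) U.symm.toLinearEquiv]
      congr 1
    simp_rw [e]

lemma per_isom (U : E3 ≃ₗᵢ[ℝ] E3) (S : Set E3) : per (U '' S) = per S := by
  unfold per
  congr 1
  refine (perCand_isom U S).antisymm ?_
  have := perCand_isom U.symm (U '' S)
  rwa [← image_comp, show (U.symm ∘ U : E3 → E3) = id from funext fun x => by simp, image_id] at this

lemma per_smul_le {S : Set E3} {ℓ : ℝ} (hℓ : 0 < ℓ) {a : ℝ} (ha : a ∈ perCand (ℓ • S)) :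
    ∃ b ∈ perCand S, a = ℓ ^ 2 * b := by
  obtain ⟨φ, hφ, rfl⟩ := mem_perCand.1 ha
  refine ⟨_, mem_perCand.2 ⟨fun x => φ (ℓ • x), ⟨?_, ?_, ?_⟩, rfl⟩, ?_⟩
  · exact hφ.1.comp (contDiff_const_smul ℓ)
  · exact hφ.2.1.comp_homeomorph (Homeomorph.smulOfNeZero ℓ hℓ.ne')
  · intro x; exact hφ.2.2 _
  · have e : ∀ x, divg (fun x => φ (ℓ • x)) x = ℓ * divg φ (ℓ • x) := by
      intro x
      simp only [divg]
      rw [fderiv_comp_smul]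
      simp
    simp_rw [e]
    rw [integral_const_mul, Measure.setIntegral_comp_smul_of_pos _ _ _ hℓ]
    simp
    field_simp

lemma per_smul {S : Set E3} {ℓ : ℝ} (hℓ : 0 < ℓ) (hS : HasFinPer S) :
    HasFinPer (ℓ • S) ∧ per (ℓ • S) = ℓ ^ 2 * per S := by
  have h1 : ∀ a ∈ perCand (ℓ • S), a ≤ ℓ ^ 2 * per S := by
    intro a ha
    obtain ⟨b, hb, rfl⟩ := per_smul_le hℓ ha
    exact mul_le_mul_of_nonneg_left (le_csSup hS hb) (by positivity)
  have hf : HasFinPer (ℓ • S) := ⟨_, h1⟩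
  refine ⟨hf, le_antisymm (csSup_le ⟨0, zero_mem_perCand _⟩ h1) ?_⟩
  have h2 : per S ≤ (ℓ⁻¹) ^ 2 * per (ℓ • S) := by
    refine csSup_le ⟨0, zero_mem_perCand _⟩ fun a ha => ?_
    have : a ∈ perCand (ℓ⁻¹ • (ℓ • S)) := by rwa [inv_smul_smul₀ hℓ.ne']
    obtain ⟨b, hb, rfl⟩ := per_smul_le (inv_pos.2 hℓ) this
    exact mul_le_mul_of_nonneg_left (le_csSup hf hb) (by positivity)
  calc ℓ ^ 2 * per S ≤ ℓ ^ 2 * ((ℓ⁻¹) ^ 2 * per (ℓ • S)) := mul_le_mul_of_nonneg_left h2 (by positivity)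
    _ = per (ℓ • S) := by field_simp

lemma rot_isom {R : Matrix (Fin 3) (Fin 3) ℝ} (hR : R ∈ SO3) :
    ∃ U : E3 ≃ₗᵢ[ℝ] E3, ∀ x, U x = rot R x := by
  have hmem : R ∈ Matrix.unitaryGroup (Fin 3) ℝ := by
    rw [Matrix.mem_unitaryGroup_iff]
    exact hR.1
  have h1 : R.transpose * R = 1 := mul_eq_one_comm.1 hR.1
  let A : E3 →ₗ[ℝ] E3 := Matrix.toEuclideanLin R
  have hA : ∀ x, A x = rot R x := fun x => rfl
  have hn : ∀ x, ‖A x‖ = ‖x‖ := by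
    intro x
    have : ‖A x‖ ^ 2 = ‖x‖ ^ 2 := by
      rw [← real_inner_self_eq_norm_sq, ← real_inner_self_eq_norm_sq]
      simp only [EuclideanSpace.inner_eq_star_dotProduct, star_trivial]
      change (R.mulVec x.ofLp) ⬝ᵥ (R.mulVec x.ofLp) = x.ofLp ⬝ᵥ x.ofLp
      rw [Matrix.dotProduct_mulVec, ← Matrix.mulVec_transpose, Matrix.mulVec_mulVec, h1,
        Matrix.one_mulVec]
    exact (sq_eq_sq₀ (norm_nonneg _) (norm_nonneg _)).1 this
  let I : E3 →ₗᵢ[ℝ] E3 := ⟨A, hn⟩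
  exact ⟨I.toLinearIsometryEquiv rfl, fun x => hA x⟩

lemma rigid_eq (R : Matrix (Fin 3) (Fin 3) ℝ) (τ : E3) (S : Set E3) :
    rigidImage R τ S = tr (rot R '' S) τ := by
  ext x
  constructor
  · rintro ⟨y, hy, rfl⟩
    exact ⟨y, hy, by simp⟩
  · rintro ⟨y, hy, h⟩
    exact ⟨y, hy, by simp [h]⟩

lemma fixed_rot {Δ : Set E3} (hΔo : IsOpen Δ) (hΔc : Convex ℝ Δ) (hΔvol : volume Δ = 1)
    {ℓ : ℝ} (hℓ : 0 < ℓ) {Ω : Set E3} (hΩm : MeasurableSet Ω) (hΩfin : volume Ω < ⊤)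
    (hΩper : HasFinPer Ω) {R : Matrix (Fin 3) (Fin 3) ℝ} (hR : R ∈ SO3) :
    ∫ τ : E3, per (Ω ∩ rigidImage R τ (ℓ • Δ)) = per Ω * ℓ ^ 3 + vol Ω * (ℓ ^ 2 * per Δ) := by
  obtain ⟨U, hU⟩ := rot_isom hR
  have hUr : rot R '' (ℓ • Δ) = U '' (ℓ • Δ) := image_congr fun x _ => (hU x).symm
  simp_rw [rigid_eq, hUr]
  set K : Set E3 := U '' (ℓ • Δ) with hKdef
  have hDne : Δ.Nonempty := nonempty_of_measure_ne_zero (μ := volume) (by simp [hΔvol])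
  have hDper : HasFinPer Δ := hasFinPer_convex hΔo hΔc (by simp [hΔvol]) hDne
  have hlo : IsOpen (ℓ • Δ) := hΔo.smul₀ hℓ.ne'
  have hKo : IsOpen K := U.toHomeomorph.isOpenMap _ hlo
  have hKc : Convex ℝ K := (hΔc.smul ℓ).linear_image U.toLinearEquiv.toLinearMap
  have hKv : volume K = ENNReal.ofReal (ℓ ^ 3) := by
    rw [hKdef, ← U.measurePreserving.measure_preimage_emb U.toHomeomorph.measurableEmbedding,
      U.injective.preimage_image, Measure.addHaar_smul]
    simp [hΔvol, abs_of_pos hℓ]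
  have hKf : volume K < ⊤ := by rw [hKv]; exact ENNReal.ofReal_lt_top
  have hKp : per K = ℓ ^ 2 * per Δ := by
    rw [hKdef, per_isom, (per_smul hℓ hDper).2]
  have hKfin : HasFinPer K := hasFinPer_convex hKo hKc hKf ((hDne.smul_set).image _)
  have up := upper hΩm hΩfin hKo.measurableSet hKf
  have lo := lower hΩm hΩfin hKo hKf hΩper hKfin
  have e : eper Ω * volume K + volume Ω * eper K =
      ENNReal.ofReal (per Ω * (volume K).toReal + (volume Ω).toReal * per K) := by
    rw [ENNReal.ofReal_add, ENNReal.ofReal_mul, ENNReal.ofReal_mul, ENNReal.ofReal_toReal hKf.ne,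
      ENNReal.ofReal_toReal hΩfin.ne, eper_eq_ofReal hΩper, eper_eq_ofReal hKfin]
    · exact ENNReal.toReal_nonneg
    · exact per_nonneg _
    · exact mul_nonneg (per_nonneg _) ENNReal.toReal_nonneg
    · exact mul_nonneg ENNReal.toReal_nonneg (per_nonneg _)
  have eq := le_antisymm (up.trans_eq e) lo
  have hm := meas_eper hΩm hKo.measurableSet hKc
  simp_rw [per_eq_toReal (Ω ∩ tr K _)]
  rw [integral_toReal hm.aemeasurable
    (ae_lt_top hm (by rw [eq]; exact ENNReal.ofReal_ne_top)), eq, ENNReal.toReal_ofReal, hKp, hKv,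
    ENNReal.toReal_ofReal (by positivity), vol]
  exact add_nonneg (mul_nonneg (per_nonneg _) ENNReal.toReal_nonneg)
    (mul_nonneg ENNReal.toReal_nonneg (per_nonneg _))

/-- **Localization of the perimeter**: for a tetrahedron `Δ` of unit volume, every `ℓ > 0` and
every finite-measure finite-perimeter set `Ω`,
`Per(Ω) = ∫_G Per(Ω ∩ gℓΔ) dg/ℓ³ − Per(Δ)|Ω|/ℓ`, where the integral over the group
`G = ℝ³ ⋊ SO(3)` is the Haar probability measure of SO(3) times the Lebesgue measure on
translations (so that `ℓ⁻³ ∫_G 1_{gℓΔ}(x) dg = 1`). -/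
theorem perimeter_localization (μ : Measure (Matrix (Fin 3) (Fin 3) ℝ)) (hμ : IsHaarSO3 μ)
    (Δ : Set E3) (hΔ : IsTetra Δ) (hΔvol : volume Δ = 1)
    (ℓ : ℝ) (hℓ : 0 < ℓ) (Ω : Set E3) (hΩm : MeasurableSet Ω) (hΩfin : volume Ω < ⊤)
    (hΩper : HasFinPer Ω) :
    per Ω = (∫ R, (∫ τ : E3, per (Ω ∩ rigidImage R τ (ℓ • Δ))) ∂μ) / ℓ^3
      - per Δ * vol Ω / ℓ := by
  obtain ⟨hp, h0, -⟩ := hμ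
  obtain ⟨v, -, rfl⟩ := hΔ
  have hc := (convex_convexHull ℝ (Set.range v)).interior
  have hae : ∀ᵐ R ∂μ, (∫ τ : E3, per (Ω ∩ rigidImage R τ
      (ℓ • interior (convexHull ℝ (Set.range v))))) =
      per Ω * ℓ ^ 3 + vol Ω * (ℓ ^ 2 * per (interior (convexHull ℝ (Set.range v)))) := by
    have : ∀ᵐ R ∂μ, R ∈ SO3 := by rw [ae_iff]; exact h0
    filter_upwards [this] with R hR
    exact fixed_rot isOpen_interior hc hΔvol hℓ hΩm hΩfin hΩper hR
  rw [integral_congr_ae hae, integral_const]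
  simp only [probReal_univ, one_smul]
  field_simp
  ring

end
end

section
/- Let Ω ⊂ B(0,r) and Ω' ⊂ B(0,r') be bounded measurable subsets of ℝ³ and let z, z' ∈ ℝ³ with |z − z'| ≥ r + r'. Then the rotation-averaged Coulomb interaction satisfies ⨍_{SO(3)} ⨍_{SO(3)} ∬_{(z+RΩ)×(z'+R'Ω')} |x − y|⁻¹ dx dy dR dR' = |Ω| |Ω'| / |z − z'|, where ⨍ denotes the average with respect to the Haar probability measure on SO(3). -/
open MeasureTheory Metric Set Filter Bornology
open scoped Topology ENNReal NNReal Pointwise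

noncomputable section

lemma rot_apply (R : Matrix (Fin 3) (Fin 3) ℝ) (x : E3) (i : Fin 3) :
    rot R x i = R i 0 * x 0 + R i 1 * x 1 + R i 2 * x 2 := by
  simp [rot, Matrix.mulVec, dotProduct, Fin.sum_univ_three]

lemma rot_mul (S R : Matrix (Fin 3) (Fin 3) ℝ) (x : E3) : rot (S * R) x = rot S (rot R x) := by
  ext i
  simp only [rot_apply, Matrix.mul_apply, Fin.sum_univ_three]
  ring

lemma rot_one (x : E3) : rot 1 x = x := by
  simp [rot]

lemma norm_sq_E3 (x : E3) : ‖x‖ ^ 2 = x 0 ^ 2 + x 1 ^ 2 + x 2 ^ 2 := by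
  rw [EuclideanSpace.norm_sq_eq]; simp [Fin.sum_univ_three]

lemma norm_rot {R : Matrix (Fin 3) (Fin 3) ℝ} (hR : R ∈ SO3) (x : E3) : ‖rot R x‖ = ‖x‖ := by
  have h1 : R.transpose * R = 1 := mul_eq_one_comm.mp hR.1
  have h : ∀ i j, (R.transpose * R) i j = (1 : Matrix (Fin 3) (Fin 3) ℝ) i j := by
    intro i j; rw [h1]
  simp only [Matrix.mul_apply, Fin.sum_univ_three, Matrix.transpose_apply] at h
  have h00 := h 0 0
  have h01 := h 0 1
  have h02 := h 0 2
  have h11 := h 1 1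
  have h12 := h 1 2
  have h22 := h 2 2
  simp at h00 h01 h02 h11 h12 h22
  have : ‖rot R x‖ ^ 2 = ‖x‖ ^ 2 := by
    rw [norm_sq_E3, norm_sq_E3, rot_apply, rot_apply, rot_apply]
    linear_combination x 0 ^ 2 * h00 + x 1 ^ 2 * h11 + x 2 ^ 2 * h22 + 2 * x 0 * x 1 * h01
      + 2 * x 0 * x 2 * h02 + 2 * x 1 * x 2 * h12
  exact (sq_eq_sq₀ (norm_nonneg _) (norm_nonneg _)).mp this

lemma measurable_entry (i j : Fin 3) :
    Measurable (fun R : Matrix (Fin 3) (Fin 3) ℝ => R i j) := by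
  have h : Measurable (fun R : Fin 3 → Fin 3 → ℝ => R i j) := by fun_prop
  exact h

lemma measurable_matrix {α : Type*} [MeasurableSpace α] {f : α → Matrix (Fin 3) (Fin 3) ℝ}
    (h : ∀ i j, Measurable (fun a => f a i j)) : Measurable f := by
  have h' : @Measurable α (Fin 3 → Fin 3 → ℝ) _ _ f :=
    measurable_pi_iff.2 fun i => measurable_pi_iff.2 fun j => h i j
  exact h'

lemma measurable_E3 {α : Type*} [MeasurableSpace α] {f : α → E3}
    (h : ∀ i, Measurable (fun a => f a i)) : Measurable f := by
  have h1 : Measurable (fun a => (WithLp.toLp 2 (fun i => f a i) : E3)) := by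
    have : Measurable (fun a => (fun i => f a i)) := measurable_pi_iff.2 h
    fun_prop
  exact h1

lemma measurable_rot :
    Measurable (fun p : Matrix (Fin 3) (Fin 3) ℝ × E3 => rot p.1 p.2) := by
  refine measurable_E3 fun i => ?_
  simp only [rot_apply]
  have h := fun j => (measurable_entry i j).comp
    (measurable_fst : Measurable (Prod.fst : Matrix (Fin 3) (Fin 3) ℝ × E3 → _))
  have h' : ∀ j, Measurable (fun p : Matrix (Fin 3) (Fin 3) ℝ × E3 => p.2 j) := by
    intro j; fun_prop
  exact (((h 0).mul (h' 0)).add ((h 1).mul (h' 1))).add ((h 2).mul (h' 2))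

lemma measurable_rot_left (y : E3) :
    Measurable (fun R : Matrix (Fin 3) (Fin 3) ℝ => rot R y) :=
  measurable_rot.comp (measurable_id.prodMk measurable_const)

lemma measurable_mul_left' (S : Matrix (Fin 3) (Fin 3) ℝ) :
    Measurable (fun R : Matrix (Fin 3) (Fin 3) ℝ => S * R) := by
  refine measurable_matrix fun i j => ?_
  simp only [Matrix.mul_apply, Fin.sum_univ_three]
  exact (((measurable_entry 0 j).const_mul _).add ((measurable_entry 1 j).const_mul _)).add
    ((measurable_entry 2 j).const_mul _)

lemma haar_ae {μ : Measure (Matrix (Fin 3) (Fin 3) ℝ)} (hμ : IsHaarSO3 μ) :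
    ∀ᵐ R ∂μ, R ∈ SO3 := hμ.2.1

lemma haar_deriv_zero {μ : Measure (Matrix (Fin 3) (Fin 3) ℝ)} (hμ : IsHaarSO3 μ)
    (S : ℝ → Matrix (Fin 3) (Fin 3) ℝ) (hS : ∀ t, S t ∈ SO3) (hS0 : S 0 = 1)
    (f Φ : E3 → ℝ) (b : ℝ) (hfm : Measurable f) (hΦm : Measurable Φ)
    (hfc : ContinuousOn f (sphere 0 b)) (hΦc : ContinuousOn Φ (sphere 0 b))
    (hd : ∀ x ∈ sphere (0 : E3) b, ∀ θ,
      HasDerivAt (fun t => f (rot (S t) x)) (Φ (rot (S θ) x)) θ)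
    (y : E3) (hy : ‖y‖ = b) :
    Integrable (fun R => Φ (rot R y)) μ ∧ ∫ R, Φ (rot R y) ∂μ = 0 := by
  have : IsProbabilityMeasure μ := hμ.1
  obtain ⟨C, hC⟩ := (isCompact_sphere (0 : E3) b).exists_bound_of_continuousOn hfc
  obtain ⟨C', hC'⟩ := (isCompact_sphere (0 : E3) b).exists_bound_of_continuousOn hΦc
  have hmem : ∀ R ∈ SO3, rot R y ∈ sphere (0 : E3) b := by
    intro R hR; simp [norm_rot hR, hy]
  have hmem2 : ∀ t, ∀ x ∈ sphere (0 : E3) b, rot (S t) x ∈ sphere (0 : E3) b := by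
    intro t x hx
    simp only [mem_sphere_iff_norm, sub_zero] at hx ⊢
    rw [norm_rot (hS t), hx]
  have hmeas : ∀ (g : E3 → ℝ) (hg : Measurable g) t,
      Measurable (fun R : Matrix (Fin 3) (Fin 3) ℝ => g (rot (S t) (rot R y))) := by
    intro g hg t
    simp only [← rot_mul]
    exact hg.comp ((measurable_rot_left y).comp (measurable_mul_left' (S t)))
  have hmain := hasDerivAt_integral_of_dominated_loc_of_deriv_le (μ := μ) (𝕜 := ℝ)
    (F := fun t R => f (rot (S t) (rot R y))) (F' := fun t R => Φ (rot (S t) (rot R y)))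
    (x₀ := 0) (s := univ) (bound := fun _ => C') univ_mem
    (Eventually.of_forall fun t => (hmeas f hfm t).aestronglyMeasurable)
    (by
      refine Integrable.of_bound (hmeas f hfm 0).aestronglyMeasurable C ?_
      filter_upwards [haar_ae hμ] with R hR
      exact hC _ (hmem2 _ _ (hmem R hR)))
    (hmeas Φ hΦm 0).aestronglyMeasurable
    (by
      filter_upwards [haar_ae hμ] with R hR t _
      exact hC' _ (hmem2 _ _ (hmem R hR)))
    (integrable_const _)
    (by
      filter_upwards [haar_ae hμ] with R hR t _
      exact hd _ (hmem R hR) t)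
  have hconst : (fun t => ∫ R, f (rot (S t) (rot R y)) ∂μ) = fun _ => ∫ R, f (rot R y) ∂μ := by
    funext t
    conv_rhs => rw [← hμ.2.2 (S t) (hS t)]
    rw [integral_map (f := fun R => f (rot R y)) (measurable_mul_left' (S t)).aemeasurable
      (hfm.comp (measurable_rot_left y)).aestronglyMeasurable]
    simp only [rot_mul]
  simp only [hS0, rot_one] at hmain
  refine ⟨hmain.1, ?_⟩
  have h2 := hmain.2
  rw [hconst] at h2
  exact h2.unique (hasDerivAt_const _ _)

/-- The auxiliary radial profile. -/
def gg (a b u : ℝ) : ℝ := 1 / (a ^ 2 - u + a * √(a ^ 2 + b ^ 2 - 2 * u))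

/-- Its derivative. -/
def gp (a b u : ℝ) : ℝ := (√(a ^ 2 + b ^ 2 - 2 * u) + a) /
  (√(a ^ 2 + b ^ 2 - 2 * u) * (a ^ 2 - u + a * √(a ^ 2 + b ^ 2 - 2 * u)) ^ 2)

lemma gg_pos {a b u : ℝ} (hb : 0 ≤ b) (hab : b < a) (hu : u ≤ a * b) :
    0 < √(a ^ 2 + b ^ 2 - 2 * u) ∧ 0 < a ^ 2 - u + a * √(a ^ 2 + b ^ 2 - 2 * u) := by
  have h1 : 0 < a ^ 2 + b ^ 2 - 2 * u := by nlinarith [sq_pos_of_pos (sub_pos.2 hab)]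
  have h2 := Real.sqrt_pos.2 h1
  refine ⟨h2, ?_⟩
  have : 0 < a := by linarith
  have : 0 < a * √(a ^ 2 + b ^ 2 - 2 * u) := by positivity
  nlinarith

lemma gg_deriv {a b u : ℝ} (hb : 0 ≤ b) (hab : b < a) (hu : u ≤ a * b) :
    HasDerivAt (gg a b) (gp a b u) u := by
  obtain ⟨h1, h2⟩ := gg_pos hb hab hu
  have h0 : a ^ 2 + b ^ 2 - 2 * u ≠ 0 := (Real.sqrt_pos.1 h1).ne'
  have d1 : HasDerivAt (fun u => a ^ 2 + b ^ 2 - 2 * u) (-(2 * 1)) u :=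
    ((hasDerivAt_id u).const_mul 2).const_sub _
  have d2 := d1.sqrt h0
  have d3 := (((hasDerivAt_id u).const_sub (a ^ 2)).add (d2.const_mul a))
  have d4 := d3.inv h2.ne'
  refine (d4.congr_deriv ?_).congr_of_eventuallyEq ?_
  · simp only [gp, Pi.add_apply, id]
    field_simp
    ring
  · refine Eventually.of_forall fun v => ?_
    simp [gg]

lemma gg_identity {a b u : ℝ} (hb : 0 ≤ b) (hab : b < a) (hu : u ≤ a * b) :
    gp a b u * (a ^ 2 * b ^ 2 - u ^ 2) - 2 * (gg a b u * u) =
      1 - a * (1 / √(a ^ 2 + b ^ 2 - 2 * u)) := by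
  obtain ⟨h1, h2⟩ := gg_pos hb hab hu
  have hs := Real.sq_sqrt (Real.sqrt_pos.1 h1).le
  unfold gg gp
  set s := √(a ^ 2 + b ^ 2 - 2 * u)
  have hu' : u = (a ^ 2 + b ^ 2 - s ^ 2) / 2 := by linarith
  clear_value s
  have e : a ^ 2 - u + a * s = ((s + a) ^ 2 - b ^ 2) / 2 := by rw [hu']; ring
  rw [e] at h2 ⊢
  rw [hu']
  have h3 : (s + a) ^ 2 - b ^ 2 ≠ 0 := by intro h; rw [h] at h2; simp at h2
  field_simp
  ring

/-- The Euclidean scalar product, in coordinates. -/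
def dt (w x : E3) : ℝ := w 0 * x 0 + w 1 * x 1 + w 2 * x 2

lemma dt_le (w x : E3) : dt w x ≤ ‖w‖ * ‖x‖ := by
  have h : dt w x = inner ℝ x w := by
    simp [dt, PiLp.inner_apply, Fin.sum_univ_three]
  rw [h, mul_comm]
  exact real_inner_le_norm _ _

lemma continuous_dt (w : E3) : Continuous (dt w) := by
  unfold dt; fun_prop

lemma norm_sub_eq_sqrt (w x : E3) : ‖w - x‖ = √(‖w‖ ^ 2 + ‖x‖ ^ 2 - 2 * dt w x) := by
  have h : ‖w‖ ^ 2 + ‖x‖ ^ 2 - 2 * dt w x = ‖w - x‖ ^ 2 := by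
    simp only [norm_sq_E3, dt, PiLp.sub_apply]; ring
  rw [h, Real.sqrt_sq (norm_nonneg _)]

/-- Generator applied to the test function. -/
def PhiR (w : E3) (b : ℝ) (i j : Fin 3) (x : E3) : ℝ :=
  gp ‖w‖ b (dt w x) * (-(w i * x j - w j * x i)) * (w i * x j - w j * x i)
    + gg ‖w‖ b (dt w x) * (w i * x i + w j * x j)

lemma measurable_gg (a b : ℝ) : Measurable (gg a b) := by
  unfold gg; fun_prop

lemma measurable_gp (a b : ℝ) : Measurable (gp a b) := by
  unfold gp; fun_prop

lemma haar_Phi {μ : Measure (Matrix (Fin 3) (Fin 3) ℝ)} (hμ : IsHaarSO3 μ)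
    (S : ℝ → Matrix (Fin 3) (Fin 3) ℝ) (hS : ∀ t, S t ∈ SO3) (hS0 : S 0 = 1)
    (w y : E3) (hwy : ‖y‖ < ‖w‖) (i j : Fin 3)
    (hi : ∀ x θ, HasDerivAt (fun t => rot (S t) x i) (-(rot (S θ) x j)) θ)
    (hj : ∀ x θ, HasDerivAt (fun t => rot (S t) x j) (rot (S θ) x i) θ)
    (hu : ∀ x θ, HasDerivAt (fun t => dt w (rot (S t) x))
      (-(w i * rot (S θ) x j - w j * rot (S θ) x i)) θ) :
    Integrable (fun R => PhiR w ‖y‖ i j (rot R y)) μ ∧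
      ∫ R, PhiR w ‖y‖ i j (rot R y) ∂μ = 0 := by
  have hdt : ∀ x ∈ sphere (0 : E3) ‖y‖, dt w x ≤ ‖w‖ * ‖y‖ := by
    intro x hx
    have := dt_le w x
    simp only [mem_sphere_iff_norm, sub_zero] at hx
    rwa [hx] at this
  have hgg := measurable_gg ‖w‖ ‖y‖
  have hgp := measurable_gp ‖w‖ ‖y‖
  have hdc := continuous_dt w
  have hdm := hdc.measurable
  have hsq : Continuous fun x => √(‖w‖ ^ 2 + ‖y‖ ^ 2 - 2 * dt w x) := by fun_prop
  have cgg : ContinuousOn (fun x => gg ‖w‖ ‖y‖ (dt w x)) (sphere (0 : E3) ‖y‖) := by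
    unfold gg
    refine ContinuousOn.div (by fun_prop) (by fun_prop) ?_
    intro x hx
    exact (gg_pos (norm_nonneg y) hwy (hdt x hx)).2.ne'
  have cgp : ContinuousOn (fun x => gp ‖w‖ ‖y‖ (dt w x)) (sphere (0 : E3) ‖y‖) := by
    unfold gp
    refine ContinuousOn.div (by fun_prop) (by fun_prop) ?_
    intro x hx
    have := gg_pos (norm_nonneg y) hwy (hdt x hx)
    exact (mul_pos this.1 (pow_pos this.2 2)).ne'
  refine haar_deriv_zero hμ S hS hS0
    (fun x => gg ‖w‖ ‖y‖ (dt w x) * (w i * x j - w j * x i)) (PhiR w ‖y‖ i j) ‖y‖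
    ?_ ?_ ?_ ?_ ?_ y rfl
  · exact (hgg.comp hdm).mul (by fun_prop)
  · unfold PhiR
    exact (((hgp.comp hdm).mul (by fun_prop)).mul (by fun_prop)).add
      ((hgg.comp hdm).mul (by fun_prop))
  · exact cgg.mul (by fun_prop)
  · unfold PhiR
    exact ((cgp.mul (by fun_prop)).mul (by fun_prop)).add (cgg.mul (by fun_prop))
  · intro x hx θ
    have hx' : rot (S θ) x ∈ sphere (0 : E3) ‖y‖ := by
      simp only [mem_sphere_iff_norm, sub_zero] at hx ⊢
      rw [norm_rot (hS θ), hx]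
    have d1 := (gg_deriv (norm_nonneg y) hwy (hdt _ hx')).comp θ (hu x θ)
    have d2 := ((hj x θ).const_mul (w i)).sub ((hi x θ).const_mul (w j))
    refine (d1.mul d2).congr_deriv ?_
    simp only [PhiR, Function.comp, Pi.sub_apply]
    ring

lemma Phi_sum (w x : E3) (hwx : ‖x‖ < ‖w‖) :
    PhiR w ‖x‖ 0 1 x + PhiR w ‖x‖ 1 2 x + PhiR w ‖x‖ 2 0 x = ‖w‖ * (1 / ‖w - x‖) - 1 := by
  have h := gg_identity (norm_nonneg x) hwx (dt_le w x)
  rw [norm_sub_eq_sqrt]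
  have h2 : ‖w‖ ^ 2 * ‖x‖ ^ 2 - dt w x ^ 2 = (w 0 * x 1 - w 1 * x 0) ^ 2 +
      (w 1 * x 2 - w 2 * x 1) ^ 2 + (w 2 * x 0 - w 0 * x 2) ^ 2 := by
    rw [norm_sq_E3, norm_sq_E3, dt]; ring
  rw [h2] at h
  have h3 : dt w x = w 0 * x 0 + w 1 * x 1 + w 2 * x 2 := rfl
  unfold PhiR
  linear_combination (-1) * h - 2 * gg ‖w‖ ‖x‖ (dt w x) * h3

/-- Rotations about the coordinate axes. -/
def S01 (t : ℝ) : Matrix (Fin 3) (Fin 3) ℝ :=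
  !![Real.cos t, -Real.sin t, 0; Real.sin t, Real.cos t, 0; 0, 0, 1]
/-- Rotations about the coordinate axes. -/
def S12 (t : ℝ) : Matrix (Fin 3) (Fin 3) ℝ :=
  !![1, 0, 0; 0, Real.cos t, -Real.sin t; 0, Real.sin t, Real.cos t]
/-- Rotations about the coordinate axes. -/
def S20 (t : ℝ) : Matrix (Fin 3) (Fin 3) ℝ :=
  !![Real.cos t, 0, Real.sin t; 0, 1, 0; -Real.sin t, 0, Real.cos t]

lemma S01_mem (t : ℝ) : S01 t ∈ SO3 := by
  have := Real.sin_sq_add_cos_sq t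
  refine ⟨?_, ?_⟩
  · ext i j
    fin_cases i <;> fin_cases j <;>
      simp [S01, Matrix.mul_apply, Fin.sum_univ_three] <;> linarith
  · simp [S01, Matrix.det_fin_three]; linarith

lemma S12_mem (t : ℝ) : S12 t ∈ SO3 := by
  have := Real.sin_sq_add_cos_sq t
  refine ⟨?_, ?_⟩
  · ext i j
    fin_cases i <;> fin_cases j <;>
      simp [S12, Matrix.mul_apply, Fin.sum_univ_three] <;> linarith
  · simp [S12, Matrix.det_fin_three]; linarith

lemma S20_mem (t : ℝ) : S20 t ∈ SO3 := by
  have := Real.sin_sq_add_cos_sq t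
  refine ⟨?_, ?_⟩
  · ext i j
    fin_cases i <;> fin_cases j <;>
      simp [S20, Matrix.mul_apply, Fin.sum_univ_three] <;> linarith
  · simp [S20, Matrix.det_fin_three]; linarith

lemma deriv_aux (p q r p' q' r' A B C : ℝ) (θ : ℝ) :
    HasDerivAt (fun t => A * (p * Real.cos t + p' * Real.sin t)
      + B * (q * Real.cos t + q' * Real.sin t) + C * (r * Real.cos t + r' * Real.sin t))
      (A * (-p * Real.sin θ + p' * Real.cos θ)
      + B * (-q * Real.sin θ + q' * Real.cos θ) + C * (-r * Real.sin θ + r' * Real.cos θ)) θ := by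
  have h : ∀ a b : ℝ, HasDerivAt (fun t => a * Real.cos t + b * Real.sin t)
      (-a * Real.sin θ + b * Real.cos θ) θ := by
    intro a b
    refine (((Real.hasDerivAt_cos θ).const_mul a).add
      ((Real.hasDerivAt_sin θ).const_mul b)).congr_deriv ?_
    ring
  exact (((h p p').const_mul A).add ((h q q').const_mul B)).add ((h r r').const_mul C)

lemma deriv_aux' (a b c θ : ℝ) :
    HasDerivAt (fun t => a * Real.cos t + b * Real.sin t + c)
      (-a * Real.sin θ + b * Real.cos θ) θ := by
  refine ((((Real.hasDerivAt_cos θ).const_mul a).add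
      ((Real.hasDerivAt_sin θ).const_mul b)).add_const c).congr_deriv ?_
  ring

lemma haar_01 {μ : Measure (Matrix (Fin 3) (Fin 3) ℝ)} (hμ : IsHaarSO3 μ)
    (w y : E3) (hwy : ‖y‖ < ‖w‖) :
    Integrable (fun R => PhiR w ‖y‖ 0 1 (rot R y)) μ ∧
      ∫ R, PhiR w ‖y‖ 0 1 (rot R y) ∂μ = 0 := by
  refine haar_Phi hμ S01 S01_mem ?_ w y hwy 0 1 ?_ ?_ ?_
  · ext i j; fin_cases i <;> fin_cases j <;> simp [S01]
  · intro x θ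
    convert! deriv_aux' (x 0) (-x 1) 0 θ using 1
    · funext t; simp [rot_apply, S01]; ring
    · simp [rot_apply, S01]; ring
  · intro x θ
    convert! deriv_aux' (x 1) (x 0) 0 θ using 1
    · funext t; simp [rot_apply, S01]; ring
    · simp [rot_apply, S01]; ring
  · intro x θ
    convert! deriv_aux' (w 0 * x 0 + w 1 * x 1) (-(w 0 * x 1) + w 1 * x 0) (w 2 * x 2) θ using 1
    · funext t; simp [rot_apply, S01, dt]; ring
    · simp [rot_apply, S01]; ring

lemma haar_12 {μ : Measure (Matrix (Fin 3) (Fin 3) ℝ)} (hμ : IsHaarSO3 μ)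
    (w y : E3) (hwy : ‖y‖ < ‖w‖) :
    Integrable (fun R => PhiR w ‖y‖ 1 2 (rot R y)) μ ∧
      ∫ R, PhiR w ‖y‖ 1 2 (rot R y) ∂μ = 0 := by
  refine haar_Phi hμ S12 S12_mem ?_ w y hwy 1 2 ?_ ?_ ?_
  · ext i j; fin_cases i <;> fin_cases j <;> simp [S12]
  · intro x θ
    convert! deriv_aux' (x 1) (-x 2) 0 θ using 1
    · funext t; simp [rot_apply, S12]; ring
    · simp [rot_apply, S12]; ring
  · intro x θ
    convert! deriv_aux' (x 2) (x 1) 0 θ using 1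
    · funext t; simp [rot_apply, S12]; ring
    · simp [rot_apply, S12]; ring
  · intro x θ
    convert! deriv_aux' (w 1 * x 1 + w 2 * x 2) (-(w 1 * x 2) + w 2 * x 1) (w 0 * x 0) θ using 1
    · funext t; simp [rot_apply, S12, dt]; ring
    · simp [rot_apply, S12]; ring

lemma haar_20 {μ : Measure (Matrix (Fin 3) (Fin 3) ℝ)} (hμ : IsHaarSO3 μ)
    (w y : E3) (hwy : ‖y‖ < ‖w‖) :
    Integrable (fun R => PhiR w ‖y‖ 2 0 (rot R y)) μ ∧
      ∫ R, PhiR w ‖y‖ 2 0 (rot R y) ∂μ = 0 := by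
  refine haar_Phi hμ S20 S20_mem ?_ w y hwy 2 0 ?_ ?_ ?_
  · ext i j; fin_cases i <;> fin_cases j <;> simp [S20]
  · intro x θ
    convert! deriv_aux' (x 2) (-x 0) 0 θ using 1
    · funext t; simp [rot_apply, S20]; ring
    · simp [rot_apply, S20]; ring
  · intro x θ
    convert! deriv_aux' (x 0) (x 2) 0 θ using 1
    · funext t; simp [rot_apply, S20]; ring
    · simp [rot_apply, S20]; ring
  · intro x θ
    convert! deriv_aux' (w 2 * x 2 + w 0 * x 0) (-(w 2 * x 0) + w 0 * x 2) (w 1 * x 1) θ using 1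
    · funext t; simp [rot_apply, S20, dt]; ring
    · simp [rot_apply, S20]; ring

/-- **Newton's theorem** for the orbit of a point. -/
lemma newton {μ : Measure (Matrix (Fin 3) (Fin 3) ℝ)} (hμ : IsHaarSO3 μ)
    (w y : E3) (hwy : ‖y‖ < ‖w‖) :
    ∫ R, 1 / ‖w - rot R y‖ ∂μ = 1 / ‖w‖ := by
  have : IsProbabilityMeasure μ := hμ.1
  have hw : 0 < ‖w‖ := (norm_nonneg y).trans_lt hwy
  obtain ⟨i1, e1⟩ := haar_01 hμ w y hwy
  obtain ⟨i2, e2⟩ := haar_12 hμ w y hwy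
  obtain ⟨i3, e3⟩ := haar_20 hμ w y hwy
  have i12 : Integrable (fun R => PhiR w ‖y‖ 0 1 (rot R y) + PhiR w ‖y‖ 1 2 (rot R y)) μ :=
    i1.add i2
  have i123 : Integrable (fun R => PhiR w ‖y‖ 0 1 (rot R y) + PhiR w ‖y‖ 1 2 (rot R y)
      + PhiR w ‖y‖ 2 0 (rot R y)) μ := i12.add i3
  have hs : ∫ R, (PhiR w ‖y‖ 0 1 (rot R y) + PhiR w ‖y‖ 1 2 (rot R y)
      + PhiR w ‖y‖ 2 0 (rot R y)) ∂μ = 0 := by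
    rw [integral_add i12 i3, integral_add i1 i2, e1, e2, e3]; simp
  have heq : ∀ᵐ R ∂μ, 1 / ‖w - rot R y‖ = (1 / ‖w‖) * ((PhiR w ‖y‖ 0 1 (rot R y)
      + PhiR w ‖y‖ 1 2 (rot R y) + PhiR w ‖y‖ 2 0 (rot R y)) + 1) := by
    filter_upwards [haar_ae hμ] with R hR
    have h := Phi_sum w (rot R y) (by rwa [norm_rot hR])
    rw [norm_rot hR] at h
    rw [h]
    field_simp
    ring
  rw [integral_congr_ae heq, integral_const_mul, integral_add i123
    (integrable_const _), hs]
  simp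

/-- A rotation as a linear isometry. -/
def rotIso (R : Matrix (Fin 3) (Fin 3) ℝ) (hR : R ∈ SO3) : E3 →ₗᵢ[ℝ] E3 where
  toFun := rot R
  map_add' x y := by
    ext i; simp only [rot_apply, PiLp.add_apply]; ring
  map_smul' c x := by
    ext i; simp only [rot_apply, PiLp.smul_apply, smul_eq_mul, RingHom.id_apply]; ring
  norm_map' x := norm_rot hR x

lemma setIntegral_rigid {R : Matrix (Fin 3) (Fin 3) ℝ} (hR : R ∈ SO3) (z : E3) (S : Set E3)
    (g : E3 → ℝ) :
    ∫ x in rigidImage R z S, g x = ∫ x in S, g (rot R x + z) := by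
  let e : E3 ≃ₗᵢ[ℝ] E3 := (rotIso R hR).toLinearIsometryEquiv rfl
  have h1 : MeasurePreserving (fun x : E3 => rot R x + z) volume volume :=
    (measurePreserving_add_right volume z).comp e.measurePreserving
  have h2 : MeasurableEmbedding (fun x : E3 => rot R x + z) :=
    (measurableEmbedding_addRight z).comp e.toHomeomorph.measurableEmbedding
  exact h1.setIntegral_image_emb h2 g S

lemma integral_rot_set {μ : Measure (Matrix (Fin 3) (Fin 3) ℝ)} (hμ : IsHaarSO3 μ)
    (w : E3) (r : ℝ) (hw : r < ‖w‖) (Ω : Set E3) (hΩm : MeasurableSet Ω) (hΩ : Ω ⊆ ball 0 r) :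
    Integrable (fun R => ∫ y in Ω, 1 / ‖w - rot R y‖) μ ∧
    ∫ R, (∫ y in Ω, 1 / ‖w - rot R y‖) ∂μ = vol Ω / ‖w‖ := by
  have : IsProbabilityMeasure μ := hμ.1
  have hfin : volume Ω < ⊤ := (measure_mono hΩ).trans_lt measure_ball_lt_top
  have : IsFiniteMeasure (volume.restrict Ω) := ⟨by simpa using hfin⟩
  have hm : Measurable (fun p : Matrix (Fin 3) (Fin 3) ℝ × E3 => 1 / ‖w - rot p.1 p.2‖) :=
    ((measurable_rot.const_sub w).norm).const_div 1
  have hint : Integrable (Function.uncurry fun (R : Matrix (Fin 3) (Fin 3) ℝ) (y : E3) =>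
      1 / ‖w - rot R y‖) (μ.prod (volume.restrict Ω)) := by
    refine Integrable.of_bound hm.aestronglyMeasurable (1 / (‖w‖ - r)) ?_
    have h1 : ∀ᵐ p ∂(μ.prod (volume.restrict Ω)), p.1 ∈ SO3 :=
      Measure.quasiMeasurePreserving_fst.ae (haar_ae hμ)
    have h2 : ∀ᵐ p ∂(μ.prod (volume.restrict Ω)), p.2 ∈ Ω :=
      Measure.quasiMeasurePreserving_snd.ae (ae_restrict_mem hΩm)
    filter_upwards [h1, h2] with p hp1 hp2
    have h3 : ‖p.2‖ < r := by simpa using hΩ hp2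
    have h4 := norm_sub_norm_le w (rot p.1 p.2)
    rw [norm_rot hp1] at h4
    have h5 : 0 < ‖w‖ - r := by linarith
    simp only [Function.uncurry]
    rw [Real.norm_of_nonneg (by positivity)]
    exact one_div_le_one_div_of_le h5 (by linarith)
  refine ⟨hint.integral_prod_left, ?_⟩
  rw [integral_integral_swap hint]
  have : ∫ y in Ω, ∫ R, 1 / ‖w - rot R y‖ ∂μ = ∫ y in Ω, 1 / ‖w‖ := by
    refine setIntegral_congr_fun hΩm fun y hy => ?_
    have h3 : ‖y‖ < r := by simpa using hΩ hy
    exact newton hμ w y (h3.trans hw)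
  rw [this]
  simp [vol, Measure.real, div_eq_mul_inv]

/-- **Newton's theorem for rotation averages**: for `Ω ⊆ B(0,r)`, `Ω' ⊆ B(0,r')` and centers
with `|z-z'| ≥ r+r'`, the doubly rotation-averaged Coulomb interaction between `z+RΩ` and
`z'+R'Ω'` equals `|Ω||Ω'|/|z-z'|`. -/
theorem rotation_average_interaction (μ : Measure (Matrix (Fin 3) (Fin 3) ℝ))
    (hμ : IsHaarSO3 μ) (r r' : ℝ) (Ω Ω' : Set E3)
    (hΩm : MeasurableSet Ω) (hΩ'm : MeasurableSet Ω')
    (hΩ : Ω ⊆ ball 0 r) (hΩ' : Ω' ⊆ ball 0 r')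
    (z z' : E3) (hsep : r + r' ≤ ‖z - z'‖) :
    (∫ R, (∫ R', (∫ x in rigidImage R z Ω, ∫ y in rigidImage R' z' Ω', 1 / ‖x - y‖) ∂μ) ∂μ)
      = vol Ω * vol Ω' / ‖z - z'‖ := by
  have : IsProbabilityMeasure μ := hμ.1
  rcases Ω.eq_empty_or_nonempty with rfl | ⟨x0, hx0⟩
  · simp [rigidImage, vol]
  rcases Ω'.eq_empty_or_nonempty with rfl | ⟨y0, hy0⟩
  · simp [rigidImage, vol]
  have hr : 0 < r := by
    have := hΩ hx0
    simp only [mem_ball_zero_iff] at this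
    exact (norm_nonneg _).trans_lt this
  have hr' : 0 < r' := by
    have := hΩ' hy0
    simp only [mem_ball_zero_iff] at this
    exact (norm_nonneg _).trans_lt this
  have hfin : volume Ω < ⊤ := (measure_mono hΩ).trans_lt measure_ball_lt_top
  have : IsFiniteMeasure (volume.restrict Ω) := ⟨by simpa using hfin⟩
  have hfin' : volume Ω' < ⊤ := (measure_mono hΩ').trans_lt measure_ball_lt_top
  have : IsFiniteMeasure (volume.restrict Ω') := ⟨by simpa using hfin'⟩
  have inner : ∀ R ∈ SO3,
      ∫ R', (∫ x in rigidImage R z Ω, ∫ y in rigidImage R' z' Ω', 1 / ‖x - y‖) ∂μ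
        = vol Ω' * ∫ x in Ω, 1 / ‖(z' - z) - rot R x‖ := by
    intro R hR
    have hw : ∀ x ∈ Ω, r' < ‖rot R x + z - z'‖ := by
      intro x hx
      have h3 : ‖x‖ < r := by simpa using hΩ hx
      have h4 := norm_sub_norm_le (z - z') (-rot R x)
      rw [norm_neg, norm_rot hR] at h4
      have h5 : z - z' - -rot R x = rot R x + z - z' := by abel
      rw [h5] at h4
      linarith
    have e1 : ∫ R', (∫ x in rigidImage R z Ω, ∫ y in rigidImage R' z' Ω', 1 / ‖x - y‖) ∂μ
        = ∫ R', (∫ x in Ω, ∫ y in Ω', 1 / ‖(rot R x + z - z') - rot R' y‖) ∂μ := by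
      refine integral_congr_ae ?_
      filter_upwards [haar_ae hμ] with R' hR'
      rw [setIntegral_rigid hR]
      refine integral_congr_ae (Eventually.of_forall fun x => ?_)
      simp only []
      rw [setIntegral_rigid hR']
      refine integral_congr_ae (Eventually.of_forall fun y => ?_)
      simp only []
      congr 2
      abel
    have hwm : Measurable (fun x : E3 => rot R x + z - z') :=
      ((measurable_rot.comp (measurable_const.prodMk measurable_id)).add_const z).sub_const z'
    have hNm : StronglyMeasurable (fun p : Matrix (Fin 3) (Fin 3) ℝ × E3 =>
        ∫ y in Ω', 1 / ‖(rot R p.2 + z - z') - rot p.1 y‖) := by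
      refine StronglyMeasurable.integral_prod_right (f := fun (p : Matrix (Fin 3) (Fin 3) ℝ × E3)
        (y : E3) => 1 / ‖(rot R p.2 + z - z') - rot p.1 y‖) ?_
      refine Measurable.stronglyMeasurable ?_
      have a1 : Measurable (fun q : (Matrix (Fin 3) (Fin 3) ℝ × E3) × E3 => rot q.1.1 q.2) :=
        measurable_rot.comp ((measurable_fst.comp measurable_fst).prodMk measurable_snd)
      have a2 : Measurable (fun q : (Matrix (Fin 3) (Fin 3) ℝ × E3) × E3 =>
          rot R q.1.2 + z - z') := hwm.comp (measurable_snd.comp measurable_fst)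
      exact ((a2.sub a1).norm).const_div 1
    have hint : Integrable (Function.uncurry fun (R' : Matrix (Fin 3) (Fin 3) ℝ) (x : E3) =>
        ∫ y in Ω', 1 / ‖(rot R x + z - z') - rot R' y‖) (μ.prod (volume.restrict Ω)) := by
      refine (integrable_prod_iff' (hNm.aestronglyMeasurable)).2 ⟨?_, ?_⟩
      · filter_upwards [ae_restrict_mem hΩm] with x hx
        exact (integral_rot_set hμ _ r' (hw x hx) Ω' hΩ'm hΩ').1
      · have : Integrable (fun x => vol Ω' / ‖rot R x + z - z'‖) (volume.restrict Ω) := by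
          refine Integrable.of_bound (hwm.norm.const_div _).aestronglyMeasurable (vol Ω' / r') ?_
          filter_upwards [ae_restrict_mem hΩm] with x hx
          have hv : 0 ≤ vol Ω' := ENNReal.toReal_nonneg
          rw [Real.norm_of_nonneg (by positivity)]
          exact div_le_div_of_nonneg_left hv hr' (hw x hx).le
        refine this.congr ?_
        filter_upwards [ae_restrict_mem hΩm] with x hx
        rw [← (integral_rot_set hμ _ r' (hw x hx) Ω' hΩ'm hΩ').2]
        refine integral_congr_ae (Eventually.of_forall fun R' => ?_)
        simp only [Function.uncurry]
        rw [Real.norm_of_nonneg]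
        exact integral_nonneg fun y => by positivity
    rw [e1, integral_integral_swap hint, ← integral_const_mul]
    refine setIntegral_congr_fun hΩm fun x hx => ?_
    beta_reduce
    rw [(integral_rot_set hμ _ r' (hw x hx) Ω' hΩ'm hΩ').2]
    have h5 : z' - z - rot R x = -(rot R x + z - z') := by abel
    rw [h5, norm_neg]
    ring
  have e2 := integral_congr_ae ((haar_ae hμ).mono inner)
  rw [e2, integral_const_mul,
    (integral_rot_set hμ (z' - z) r (by rw [norm_sub_rev]; linarith) Ω hΩm hΩ).2,
    norm_sub_rev z' z]
  ring

end
end
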